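/- arXiv:1410.5191 — 9 statements merged into one kernel-verified Lean document; each statement's English description precedes it below -/
import Mathlib

section
/- Fix an integer t ≥ 1 and let D be the Choice gadget with t output arcs: the directed multigraph on vertices w, x, y, z and u_i, v_i (i ∈ {1,…,t}) whose arcs are w→x, x→y (the input arc), y→z, and, for each i ∈ {1,…,t}, the arcs z→u_i, u_i→v_i (the output arcs) and v_i→w. Then: (a) every nonempty balanced arc subset of D contains the input arc, contains each of w→x, y→z, and contains exactly one output arc u_i→v_i (together with the corresponding arcs z→u_i and v_i→w); and (b) for each i ∈ {1,…,t}, the directed cycle {w→x, x→y, y→z, z→u_i, u_i→v_i, v_i→w} is a balanced arc subset containing the input arc whose unique output arc is u_i→v_i. -/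
/-- Vertices of the Choice gadget with `t` output arcs: `w`, `x`, `y`, `z` and
`u i`, `v i` for `i ∈ {1,…,t}`. -/
inductive ChV (t : ℕ) : Type
  | w : ChV t
  | x : ChV t
  | y : ChV t
  | z : ChV t
  | u (i : Fin t) : ChV t
  | v (i : Fin t) : ChV t
  deriving DecidableEq, Fintype

/-- Arcs of the Choice gadget: `w→x`, `x→y` (the input arc), `y→z`, and for each
`i ∈ {1,…,t}` the arcs `z→u i`, `u i→v i` (the output arcs) and `v i→w`. -/
inductive ChA (t : ℕ) : Type
  | wx : ChA t                -- w → x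
  | input : ChA t             -- x → y  (the input arc)
  | yz : ChA t                -- y → z
  | zu (i : Fin t) : ChA t    -- z → u i
  | out (i : Fin t) : ChA t   -- u i → v i  (the output arcs)
  | vw (i : Fin t) : ChA t    -- v i → w
  deriving DecidableEq, Fintype

def chTail {t : ℕ} : ChA t → ChV t
  | .wx => .w
  | .input => .x
  | .yz => .y
  | .zu i => .z
  | .out i => .u i
  | .vw i => .v i

def chHead {t : ℕ} : ChA t → ChV t
  | .wx => .x
  | .input => .y
  | .yz => .z
  | .zu i => .u i
  | .out i => .v i
  | .vw i => .w

/-- Balanced arc subsets: at every vertex, out-degree equals in-degree. -/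
def ChBalanced {t : ℕ} (S : Finset (ChA t)) : Prop :=
  ∀ p : ChV t,
    (S.filter fun a => chTail a = p).card = (S.filter fun a => chHead a = p).card

/-! At each vertex other than `w` and `z` exactly one arc enters and exactly one leaves, so a
balanced set contains both or neither. Hence it is determined by whether it contains the path
`w → x → y → z` and by which of the paths `z → u i → v i → w` it contains. Only one arc enters `z`,
so balance at `z` picks exactly one of the latter paths if `y → z` is present and none otherwise:
the nonempty balanced sets are the `t` directed cycles. -/

theorem card_filter_eq_ite_of_unique {α β : Type*} [DecidableEq α] [DecidableEq β] (S : Finset α)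
    {f : α → β} {p : β} {a : α} (hf : ∀ c, f c = p ↔ c = a) :
    (S.filter fun c => f c = p).card = if a ∈ S then 1 else 0 := by
  simp only [hf, Finset.filter_eq', apply_ite Finset.card, Finset.card_singleton,
    Finset.card_empty]

theorem mem_iff_mem_of_card_filter_eq {α β : Type*} [DecidableEq β] {S : Finset α}
    {f g : α → β} {p : β} {a b : α}
    (h : (S.filter fun c => f c = p).card = (S.filter fun c => g c = p).card)
    (hf : ∀ c, f c = p ↔ c = a) (hg : ∀ c, g c = p ↔ c = b) : a ∈ S ↔ b ∈ S := by
  classical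
  rw [card_filter_eq_ite_of_unique S hf, card_filter_eq_ite_of_unique S hg] at h
  split_ifs at h <;> simp_all

theorem card_filter_eq_of_map_val_eq {α β : Type*} [DecidableEq β] {S : Finset α} {f g : α → β}
    (h : S.val.map f = S.val.map g) (p : β) :
    (S.filter fun a => f a = p).card = (S.filter fun a => g a = p).card := by
  have count_eq := congrArg (Multiset.count p) h
  simp only [Multiset.count_map, eq_comm (a := p)] at count_eq
  exact count_eq

namespace ChBalanced

variable {t : ℕ} {S : Finset (ChA t)}

theorem input_mem_iff (hS : ChBalanced S) : ChA.input ∈ S ↔ ChA.wx ∈ S :=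
  mem_iff_mem_of_card_filter_eq (hS .x) (by rintro ⟨⟩ <;> simp [chTail])
    (by rintro ⟨⟩ <;> simp [chHead])

theorem yz_mem_iff (hS : ChBalanced S) : ChA.yz ∈ S ↔ ChA.input ∈ S :=
  mem_iff_mem_of_card_filter_eq (hS .y) (by rintro ⟨⟩ <;> simp [chTail])
    (by rintro ⟨⟩ <;> simp [chHead])

theorem out_mem_iff (hS : ChBalanced S) (i : Fin t) : ChA.out i ∈ S ↔ ChA.zu i ∈ S :=
  mem_iff_mem_of_card_filter_eq (hS (.u i)) (by rintro ⟨⟩ <;> simp [chTail])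
    (by rintro ⟨⟩ <;> simp [chHead])

theorem vw_mem_iff (hS : ChBalanced S) (i : Fin t) : ChA.vw i ∈ S ↔ ChA.out i ∈ S :=
  mem_iff_mem_of_card_filter_eq (hS (.v i)) (by rintro ⟨⟩ <;> simp [chTail])
    (by rintro ⟨⟩ <;> simp [chHead])

theorem card_filter_zu_mem (hS : ChBalanced S) :
    (Finset.univ.filter fun i : Fin t => ChA.zu i ∈ S).card = if ChA.yz ∈ S then 1 else 0 := by
  have leaving_z : (S.filter fun a => chTail a = .z) =
      (Finset.univ.filter fun i => ChA.zu i ∈ S).image ChA.zu := by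
    ext a
    rw [Finset.mem_filter]
    cases a <;> simp [chTail]
  rw [← Finset.card_image_of_injective _ fun _ _ => ChA.zu.inj, ← leaving_z, hS .z]
  exact card_filter_eq_ite_of_unique S (by rintro ⟨⟩ <;> simp [chHead])

theorem yz_mem_of_zu_mem (hS : ChBalanced S) {i : Fin t} (hi : ChA.zu i ∈ S) : ChA.yz ∈ S := by
  by_contra hyz
  have no_zu := hS.card_filter_zu_mem
  rw [if_neg hyz, Finset.card_eq_zero, Finset.filter_eq_empty_iff] at no_zu
  exact no_zu (Finset.mem_univ i) hi

theorem yz_mem (hS : ChBalanced S) (hne : S.Nonempty) : ChA.yz ∈ S := by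
  obtain ⟨a, ha⟩ := hne
  cases a with
  | wx => exact hS.yz_mem_iff.2 (hS.input_mem_iff.2 ha)
  | input => exact hS.yz_mem_iff.2 ha
  | yz => exact ha
  | zu i => exact hS.yz_mem_of_zu_mem ha
  | out i => exact hS.yz_mem_of_zu_mem ((hS.out_mem_iff i).1 ha)
  | vw i => exact hS.yz_mem_of_zu_mem ((hS.out_mem_iff i).1 ((hS.vw_mem_iff i).1 ha))

end ChBalanced

/-- The directed cycle of the Choice gadget through the output arc `u i → v i`. -/
def chCycle {t : ℕ} (i : Fin t) : Finset (ChA t) :=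
  {ChA.wx, ChA.input, ChA.yz, ChA.zu i, ChA.out i, ChA.vw i}

theorem out_mem_chCycle_iff {t : ℕ} {i j : Fin t} : ChA.out j ∈ chCycle i ↔ j = i := by
  simp [chCycle]

theorem chBalanced_chCycle {t : ℕ} (i : Fin t) : ChBalanced (chCycle i) := by
  refine card_filter_eq_of_map_val_eq ?_
  have rotate : ([.w, .x, .y, .z, .u i, .v i] : List (ChV t)).Perm
      [.x, .y, .z, .u i, .v i, .w] := (List.rotate_perm _ 1).symm
  exact Multiset.coe_eq_coe.2 rotate

theorem ChBalanced.exists_eq_chCycle {t : ℕ} {S : Finset (ChA t)} (hS : ChBalanced S)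
    (hne : S.Nonempty) : ∃ i, S = chCycle i := by
  have hyz := hS.yz_mem hne
  have hinput := hS.yz_mem_iff.1 hyz
  have hwx := hS.input_mem_iff.1 hinput
  obtain ⟨i, hi, eq_of_mem⟩ : ∃! i, ChA.zu i ∈ S :=
    Fintype.existsUnique_iff_card_one _ |>.2 (hS.card_filter_zu_mem.trans (if_pos hyz))
  have hzu : ∀ j, ChA.zu j ∈ S ↔ j = i := fun j => ⟨eq_of_mem j, fun hj => hj ▸ hi⟩
  refine ⟨i, ?_⟩
  ext a
  cases a <;> simp [chCycle, hwx, hinput, hyz, hS.vw_mem_iff, hS.out_mem_iff, hzu]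

/-- For the Choice gadget with `t ≥ 1` output arcs:
(a) every nonempty balanced arc subset contains the input arc, contains `w→x` and `y→z`,
and contains exactly one output arc `u i→v i`, together with the corresponding arcs
`z→u i` and `v i→w`;
(b) for each `i`, the directed cycle `{w→x, x→y, y→z, z→u i, u i→v i, v i→w}` is a
balanced arc subset containing the input arc whose unique output arc is `u i→v i`. -/
theorem choice_gadget (t : ℕ) (ht : 1 ≤ t) :
    (∀ S : Finset (ChA t), ChBalanced S → S.Nonempty →
      ChA.input ∈ S ∧ ChA.wx ∈ S ∧ ChA.yz ∈ S ∧
      (∃! i : Fin t, ChA.out i ∈ S) ∧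
      (∀ i : Fin t, ChA.out i ∈ S → ChA.zu i ∈ S ∧ ChA.vw i ∈ S)) ∧
    (∀ i : Fin t,
      ChBalanced ({ChA.wx, ChA.input, ChA.yz, ChA.zu i, ChA.out i, ChA.vw i} :
        Finset (ChA t)) ∧
      ChA.input ∈ ({ChA.wx, ChA.input, ChA.yz, ChA.zu i, ChA.out i, ChA.vw i} :
        Finset (ChA t)) ∧
      (∀ j : Fin t,
        ChA.out j ∈ ({ChA.wx, ChA.input, ChA.yz, ChA.zu i, ChA.out i, ChA.vw i} :
          Finset (ChA t)) ↔ j = i)) := by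
  refine ⟨fun S hS hne => ?_,
    fun i => ⟨chBalanced_chCycle i, by simp, fun _ => out_mem_chCycle_iff⟩⟩
  obtain ⟨i, rfl⟩ := hS.exists_eq_chCycle hne
  refine ⟨by simp [chCycle], by simp [chCycle], by simp [chCycle],
    ⟨i, out_mem_chCycle_iff.2 rfl, fun _ => out_mem_chCycle_iff.1⟩, fun j hj => ?_⟩
  obtain rfl := out_mem_chCycle_iff.1 hj
  exact ⟨by simp [chCycle], by simp [chCycle]⟩
end

section
/- Fix integers t_l, t_r ≥ 1 and let D be the Checksum gadget: the directed multigraph on vertices w, z, together with x_i, y_i (i ∈ {1,…,t_l}) and u_j, v_j (j ∈ {1,…,t_r}), whose arcs are w→x_i, x_i→y_i (the left input arcs), y_i→z for each i ∈ {1,…,t_l}, and z→u_j, u_j→v_j (the right input arcs), v_j→w for each j ∈ {1,…,t_r}. Then: (a) every balanced arc subset of D contains exactly as many left input arcs as right input arcs; and (b) for all subsets L ⊆ {1,…,t_l} and R ⊆ {1,…,t_r} with |L| = |R| there is a balanced arc subset of D whose set of left input arcs is exactly {x_i→y_i : i ∈ L} and whose set of right input arcs is exactly {u_j→v_j : j ∈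 R}. -/
/-- Vertices of the Checksum gadget: `w`, `z`, together with `x i`, `y i` for
`i ∈ {1,…,tl}` and `u j`, `v j` for `j ∈ {1,…,tr}`. -/
inductive CkV (tl tr : ℕ) : Type
  | w : CkV tl tr
  | z : CkV tl tr
  | x (i : Fin tl) : CkV tl tr
  | y (i : Fin tl) : CkV tl tr
  | u (j : Fin tr) : CkV tl tr
  | v (j : Fin tr) : CkV tl tr
  deriving DecidableEq, Fintype

/-- Arcs of the Checksum gadget: `w→x i`, `x i→y i` (the left input arcs), `y i→z` for
each `i ∈ {1,…,tl}`, and `z→u j`, `u j→v j` (the right input arcs), `v j→w` for each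
`j ∈ {1,…,tr}`. -/
inductive CkA (tl tr : ℕ) : Type
  | wx (i : Fin tl) : CkA tl tr     -- w → x i
  | left (i : Fin tl) : CkA tl tr   -- x i → y i  (the left input arcs)
  | yz (i : Fin tl) : CkA tl tr     -- y i → z
  | zu (j : Fin tr) : CkA tl tr     -- z → u j
  | right (j : Fin tr) : CkA tl tr  -- u j → v j  (the right input arcs)
  | vw (j : Fin tr) : CkA tl tr     -- v j → w
  deriving DecidableEq, Fintype

def ckTail {tl tr : ℕ} : CkA tl tr → CkV tl tr
  | .wx _ => .w
  | .left i => .x i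
  | .yz i => .y i
  | .zu _ => .z
  | .right j => .u j
  | .vw j => .v j

def ckHead {tl tr : ℕ} : CkA tl tr → CkV tl tr
  | .wx i => .x i
  | .left i => .y i
  | .yz _ => .z
  | .zu j => .u j
  | .right j => .v j
  | .vw _ => .w

/-- Balanced arc subsets: at every vertex, out-degree equals in-degree. -/
def CkBalanced {tl tr : ℕ} (S : Finset (CkA tl tr)) : Prop :=
  ∀ p : CkV tl tr,
    (S.filter fun a => ckTail a = p).card = (S.filter fun a => ckHead a = p).card

/-!
The vertices `w`, `x i`, `v j` form one side of a cut that left input arcs leave and right input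
arcs enter, and that no other arc crosses; a balanced arc set crosses every cut equally often in
both directions. Conversely, a path `w → x i → y i → z` has boundary `z - w` and a path
`z → u j → v j → w` has boundary `w - z`, so equally many paths of each kind together have boundary
zero.
-/

section Balance

open Finset

variable {V A : Type*} (tail head : A → V)

/-- The boundary `∂S = ∑ a ∈ S, (head a - tail a)` of an arc set `S` of the directed multigraph
with incidence maps `tail` and `head`, as a formal integer combination of vertices. Balanced arc
sets are those of boundary zero. -/
noncomputable def arcBoundary (S : Finset A) : V →₀ ℤ :=
  ∑ a ∈ S, (Finsupp.single (head a) 1 - Finsupp.single (tail a) 1)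

variable {tail head} [DecidableEq V] {S : Finset A}

theorem arcBoundary_apply (p : V) :
    arcBoundary tail head S p = #{a ∈ S | head a = p} - #{a ∈ S | tail a = p} := by
  simp [arcBoundary, Finsupp.single_apply]

theorem arcBoundary_eq_zero_iff :
    arcBoundary tail head S = 0 ↔ ∀ p, #{a ∈ S | tail a = p} = #{a ∈ S | head a = p} := by
  simp only [Finsupp.ext_iff, arcBoundary_apply, Finsupp.coe_zero, Pi.zero_apply, sub_eq_zero,
    Nat.cast_inj]
  exact forall_congr' fun _ => eq_comm

theorem card_arcs_out_eq_card_arcs_in (X : Finset V)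
    (hS : ∀ p, #{a ∈ S | tail a = p} = #{a ∈ S | head a = p}) :
    #{a ∈ S | tail a ∈ X ∧ head a ∉ X} = #{a ∈ S | head a ∈ X ∧ tail a ∉ X} := by
  classical
  have card_tail_eq_card_head : #{a ∈ S | tail a ∈ X} = #{a ∈ S | head a ∈ X} := by
    simp only [← sum_card_fiberwise_eq_card_filter, hS]
  simpa only [filter_and_not] using card_sdiff_comm card_tail_eq_card_head

end Balance

section Checksum

open Finset

variable {tl tr : ℕ}

/-- The vertices `w`, `x i` and `v j`: one side of the cut that is crossed outwards by exactly the
left input arcs and inwards by exactly the right input arcs. -/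
def ckSide (tl tr : ℕ) : Finset (CkV tl tr) :=
  {.w} ∪ univ.image .x ∪ univ.image .v

theorem card_arcs_out_ckSide (S : Finset (CkA tl tr)) :
    #{a ∈ S | ckTail a ∈ ckSide tl tr ∧ ckHead a ∉ ckSide tl tr} = #{i | CkA.left i ∈ S} := by
  rw [← card_image_of_injective _ fun _ _ => CkA.left.inj]
  congr 1
  ext a
  cases a <;> simp [ckSide, ckTail, ckHead]

theorem card_arcs_in_ckSide (S : Finset (CkA tl tr)) :
    #{a ∈ S | ckHead a ∈ ckSide tl tr ∧ ckTail a ∉ ckSide tl tr} = #{j | CkA.right j ∈ S} := by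
  rw [← card_image_of_injective _ fun _ _ => CkA.right.inj]
  congr 1
  ext a
  cases a <;> simp [ckSide, ckTail, ckHead]

/-- The arcs of the path `w → x i → y i → z` through the `i`-th left input arc. -/
def ckLeftPath (i : Fin tl) : Finset (CkA tl tr) := {.wx i, .left i, .yz i}

/-- The arcs of the path `z → u j → v j → w` through the `j`-th right input arc. -/
def ckRightPath (j : Fin tr) : Finset (CkA tl tr) := {.zu j, .right j, .vw j}

/-- The union of the left paths selected by `L` and the right paths selected by `R`: the balanced
arc set realizing `L` and `R` when these have the same size. -/
def ckPaths (L : Finset (Fin tl)) (R : Finset (Fin tr)) : Finset (CkA tl tr) :=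
  L.biUnion ckLeftPath ∪ R.biUnion ckRightPath

theorem left_mem_ckPaths {L : Finset (Fin tl)} {R : Finset (Fin tr)} {i : Fin tl} :
    CkA.left i ∈ ckPaths L R ↔ i ∈ L := by
  simp [ckPaths, ckLeftPath, ckRightPath]

theorem right_mem_ckPaths {L : Finset (Fin tl)} {R : Finset (Fin tr)} {j : Fin tr} :
    CkA.right j ∈ ckPaths L R ↔ j ∈ R := by
  simp [ckPaths, ckLeftPath, ckRightPath]

theorem arcBoundary_ckLeftPath (i : Fin tl) :
    arcBoundary ckTail ckHead (ckLeftPath i : Finset (CkA tl tr)) =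
      Finsupp.single .z 1 - Finsupp.single .w 1 := by
  -- The sum telescopes only if the differences `head a - tail a` are kept together.
  simp [arcBoundary, ckLeftPath, ckTail, ckHead, -sum_sub_distrib]

theorem arcBoundary_ckRightPath (j : Fin tr) :
    arcBoundary ckTail ckHead (ckRightPath j : Finset (CkA tl tr)) =
      Finsupp.single .w 1 - Finsupp.single .z 1 := by
  simp [arcBoundary, ckRightPath, ckTail, ckHead, -sum_sub_distrib]

theorem arcBoundary_ckPaths (L : Finset (Fin tl)) (R : Finset (Fin tr)) :
    arcBoundary ckTail ckHead (ckPaths L R) =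
      (#L - #R : ℤ) • (Finsupp.single .z 1 - Finsupp.single .w 1) := by
  have disjoint_left_right :
      Disjoint (L.biUnion ckLeftPath) (R.biUnion (ckRightPath : Fin tr → Finset (CkA tl tr))) := by
    simp [disjoint_biUnion_right, ckLeftPath, ckRightPath]
  have disjoint_left : (L : Set (Fin tl)).PairwiseDisjoint (ckLeftPath (tr := tr)) := by
    intro i _ i' _ h
    simp [Function.onFun, ckLeftPath, h.symm]
  have disjoint_right : (R : Set (Fin tr)).PairwiseDisjoint (ckRightPath (tl := tl)) := by
    intro j _ j' _ h
    simp [Function.onFun, ckRightPath, h.symm]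
  calc arcBoundary ckTail ckHead (ckPaths L R)
      = ∑ i ∈ L, arcBoundary ckTail ckHead (ckLeftPath i) +
          ∑ j ∈ R, arcBoundary ckTail ckHead (ckRightPath j) := by
        simp only [arcBoundary, ckPaths]
        rw [sum_union disjoint_left_right, sum_biUnion disjoint_left, sum_biUnion disjoint_right]
    _ = (#L - #R : ℤ) • (Finsupp.single .z 1 - Finsupp.single .w 1) := by
        simp only [arcBoundary_ckLeftPath, arcBoundary_ckRightPath, sum_const]
        module

theorem ckBalanced_ckPaths {L : Finset (Fin tl)} {R : Finset (Fin tr)} (h : #L = #R) :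
    CkBalanced (ckPaths L R) :=
  arcBoundary_eq_zero_iff.1 <| by rw [arcBoundary_ckPaths, h, sub_self, zero_smul]

end Checksum

/-- For the Checksum gadget with `tl, tr ≥ 1`:
(a) every balanced arc subset contains exactly as many left input arcs as right input
arcs; and
(b) for all `L ⊆ {1,…,tl}`, `R ⊆ {1,…,tr}` with `|L| = |R|` there is a balanced arc
subset whose left input arcs are exactly `{x i→y i : i ∈ L}` and whose right input arcs
are exactly `{u j→v j : j ∈ R}`. -/
theorem checksum_gadget (tl tr : ℕ) (htl : 1 ≤ tl) (htr : 1 ≤ tr) :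
    (∀ S : Finset (CkA tl tr), CkBalanced S →
      (Finset.univ.filter fun i : Fin tl => CkA.left i ∈ S).card =
        (Finset.univ.filter fun j : Fin tr => CkA.right j ∈ S).card) ∧
    (∀ (L : Finset (Fin tl)) (R : Finset (Fin tr)), L.card = R.card →
      ∃ S : Finset (CkA tl tr), CkBalanced S ∧
        (∀ i : Fin tl, CkA.left i ∈ S ↔ i ∈ L) ∧
        (∀ j : Fin tr, CkA.right j ∈ S ↔ j ∈ R)) := by
  refine ⟨fun S hS => ?_, fun L R hLR => ?_⟩
  · rw [← card_arcs_out_ckSide, ← card_arcs_in_ckSide]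
    exact card_arcs_out_eq_card_arcs_in (ckSide tl tr) hS
  · exact ⟨ckPaths L R, ckBalanced_ckPaths hLR, fun _ => left_mem_ckPaths,
      fun _ => right_mem_ckPaths⟩
end

section
/- Let D₁ and D₂ be disjoint directed multigraphs, each equipped with its own sets of double arcs and forbidden pairs. Let u₁v₁, …, u_tv_t be distinct arcs of D₁ and x₁y₁, …, x_ty_t distinct arcs of D₂ such that, for each i ∈ {1,…,t}, the vertices u_i and v_i both have in-degree 1 and out-degree 1 in D₁, and x_i and y_i both have in-degree 1 and out-degree 1 in D₂. Let D be the directed multigraph formed by, for each i ∈ {1,…,t}, identifying u_i with x_i and v_i with y_i, keeping both arcs u_iv_i and x_iy_i, and adding (u_iv_i, x_iy_i) as a new double arc (the double arcs and forbidden pairs of D are those of D₁ and D₂ together with these new double arcs). Then an arc subset S of D is properly balanced in D if and only if: (1) for each i ∈ {1,…,t}, S contains either both or neither of u_iv_i and x_iy_i; and (2) S ∩ A(D₁) is a properly balanced arc subset of D₁ and S ∩ A(D₂) is a properly balanced arc subset of D₂. -/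
/-!
A set of arcs is balanced iff its multiset of tails equals its multiset of heads, and in the joined
graph both multisets are sums of a contribution of `D₁` and one of `D₂`. So balance of both parts
gives balance of the whole. Conversely, a balance equation of `D` at a vertex belonging to only one
part is that part's own equation. At a vertex where the tails of `e₁ i` and `e₂ i` are identified,
the two parts have the same out-degree, namely `1` or `0` according to whether the new double arc is
selected, while both in-degrees are at most `1`; hence the sum of the in-degrees, being `2` or `0`,
is shared equally, and each part is balanced there. Heads are symmetric.
-/

namespace Stmt3

variable {V V₁ V₂ A₁ A₂ : Type*}

/-- An arc subset `S` is balanced if at every vertex the number of arcs of `S` with that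
tail equals the number of arcs of `S` with that head. -/
def Balanced {V A : Type*} [DecidableEq V] (tl hd : A → V) (S : Finset A) : Prop :=
  ∀ v : V, (S.filter fun a => tl a = v).card = (S.filter fun a => hd a = v).card

/-- `S` respects the set `X` of double arcs. -/
def RespectsDouble {A : Type*} (X : Set (A × A)) (S : Finset A) : Prop :=
  ∀ p ∈ X, (p.1 ∈ S ↔ p.2 ∈ S)

/-- `S` respects the set `Y` of forbidden pairs. -/
def RespectsForbidden {A : Type*} (Y : Set (A × A)) (S : Finset A) : Prop :=
  ∀ p ∈ Y, ¬(p.1 ∈ S ∧ p.2 ∈ S)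

/-- `S` is properly balanced: balanced, respects double arcs and forbidden pairs. -/
def ProperlyBalanced {V A : Type*} [DecidableEq V] (tl hd : A → V)
    (X Y : Set (A × A)) (S : Finset A) : Prop :=
  Balanced tl hd S ∧ RespectsDouble X S ∧ RespectsForbidden Y S

section Balanced

variable {A : Type*}

theorem balanced_iff_map_eq_map [DecidableEq V] {tl hd : A → V} {S : Finset A} :
    Balanced tl hd S ↔ S.val.map tl = S.val.map hd := by
  simp only [Balanced, Multiset.ext, Multiset.count_map, Finset.card_def, Finset.filter_val,
    eq_comm (b := tl _), eq_comm (b := hd _)]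

theorem balanced_comp_iff [DecidableEq V] [DecidableEq V₁] {j : V₁ → V} (hj : j.Injective)
    {tl hd : A → V₁} {S : Finset A} :
    Balanced (j ∘ tl) (j ∘ hd) S ↔ Balanced tl hd S := by
  simp only [balanced_iff_map_eq_map, ← Multiset.map_map, (Multiset.map_injective hj).eq_iff]

end Balanced

theorem map_sumElim_eq_add (f : A₁ → V) (g : A₂ → V) (S : Finset (A₁ ⊕ A₂)) :
    S.val.map (Sum.elim f g) = S.toLeft.val.map f + S.toRight.val.map g := by
  conv_lhs => rw [← S.toLeft_disjSum_toRight]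
  simp only [Finset.val_disjSum, Multiset.map_disjSum, Sum.elim_inl, Sum.elim_inr]

theorem balanced_sumElim_iff_of_balanced_toLeft [DecidableEq V] {t₁ h₁ : A₁ → V} {t₂ h₂ : A₂ → V}
    {S : Finset (A₁ ⊕ A₂)} (hL : Balanced t₁ h₁ S.toLeft) :
    Balanced (Sum.elim t₁ t₂) (Sum.elim h₁ h₂) S ↔ Balanced t₂ h₂ S.toRight := by
  rw [balanced_iff_map_eq_map] at hL
  simp only [balanced_iff_map_eq_map, map_sumElim_eq_add, hL, add_right_inj]

section Degree

variable {A : Type*}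

/-- At the vertex `v`, both the out-degree and the in-degree are at most `1`, in a form that makes
sense for infinite graphs. -/
def DegreesLEOne (tl hd : A → V) (v : V) : Prop :=
  (tl ⁻¹' {v}).Subsingleton ∧ (hd ⁻¹' {v}).Subsingleton

theorem DegreesLEOne.swap {tl hd : A → V} {v : V} (h : DegreesLEOne tl hd v) :
    DegreesLEOne hd tl v :=
  And.symm h

theorem subsingleton_preimage_singleton_iff_card_filter_le_one [Fintype A] [DecidableEq V]
    {f : A → V} {v : V} :
    (f ⁻¹' {v}).Subsingleton ↔ (Finset.univ.filter fun a => f a = v).card ≤ 1 := by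
  simp [Set.Subsingleton, Finset.card_le_one]

theorem degreesLEOne_of_card_filter_eq_one [Fintype A] [DecidableEq V] {tl hd : A → V} {v : V}
    (h : (Finset.univ.filter fun a => tl a = v).card = 1 ∧
      (Finset.univ.filter fun a => hd a = v).card = 1) :
    DegreesLEOne tl hd v :=
  h.imp (fun htl => subsingleton_preimage_singleton_iff_card_filter_le_one.2 htl.le)
    fun hhd => subsingleton_preimage_singleton_iff_card_filter_le_one.2 hhd.le

theorem count_map_le_one [DecidableEq V] {f : A → V} {v : V} (hf : (f ⁻¹' {v}).Subsingleton)
    (S : Finset A) : (S.val.map f).count v ≤ 1 := by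
  rw [Multiset.count_map, ← Finset.filter_val, ← Finset.card_def, Finset.card_le_one]
  intro a ha b hb
  exact hf (Finset.mem_filter.1 ha).2.symm (Finset.mem_filter.1 hb).2.symm

theorem count_map_apply_pos_iff [DecidableEq V] {f : A → V} {e : A}
    (hf : (f ⁻¹' {f e}).Subsingleton) (S : Finset A) :
    0 < (S.val.map f).count (f e) ↔ e ∈ S := by
  rw [Multiset.count_pos, Multiset.mem_map]
  refine ⟨?_, fun he => ⟨e, he, rfl⟩⟩
  rintro ⟨a, ha, hae⟩
  exact hf hae rfl ▸ ha

end Degree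

theorem DegreesLEOne.count_map_eq_of_add_eq_add [DecidableEq V₁] [DecidableEq V₂]
    {f₁ g₁ : A₁ → V₁} {f₂ g₂ : A₂ → V₂} {e₁ : A₁} {e₂ : A₂} {S₁ : Finset A₁} {S₂ : Finset A₂}
    (hd₁ : DegreesLEOne f₁ g₁ (f₁ e₁)) (hd₂ : DegreesLEOne f₂ g₂ (f₂ e₂))
    (he : e₁ ∈ S₁ ↔ e₂ ∈ S₂)
    (hsum : (S₁.val.map f₁).count (f₁ e₁) + (S₂.val.map f₂).count (f₂ e₂) =
      (S₁.val.map g₁).count (f₁ e₁) + (S₂.val.map g₂).count (f₂ e₂)) :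
    (S₁.val.map f₁).count (f₁ e₁) = (S₁.val.map g₁).count (f₁ e₁) := by
  have hpos : 0 < (S₁.val.map f₁).count (f₁ e₁) ↔ 0 < (S₂.val.map f₂).count (f₂ e₂) := by
    rw [count_map_apply_pos_iff hd₁.1, count_map_apply_pos_iff hd₂.1, he]
  have hf₁ := count_map_le_one hd₁.1 S₁
  have hf₂ := count_map_le_one hd₂.1 S₂
  have hg₁ := count_map_le_one hd₁.2 S₁
  have hg₂ := count_map_le_one hd₂.2 S₂
  omega

section Join

variable {ι : Type*} [DecidableEq V] [DecidableEq V₁]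
  {t₁ h₁ : A₁ → V₁} {t₂ h₂ : A₂ → V₂} {e₁ : ι → A₁} {e₂ : ι → A₂} {j₁ : V₁ → V} {j₂ : V₂ → V}
  {S : Finset (A₁ ⊕ A₂)}

theorem Balanced.toLeft_of_join
    (hdeg₁ : ∀ i w, w = t₁ (e₁ i) ∨ w = h₁ (e₁ i) → DegreesLEOne t₁ h₁ w)
    (hdeg₂ : ∀ i w, w = t₂ (e₂ i) ∨ w = h₂ (e₂ i) → DegreesLEOne t₂ h₂ w)
    (hj₁ : j₁.Injective) (hj₂ : j₂.Injective)
    (hmeet : ∀ w₁ w₂, j₁ w₁ = j₂ w₂ → ∃ i,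
      (w₁ = t₁ (e₁ i) ∧ w₂ = t₂ (e₂ i)) ∨ (w₁ = h₁ (e₁ i) ∧ w₂ = h₂ (e₂ i)))
    (he : ∀ i, Sum.inl (e₁ i) ∈ S ↔ Sum.inr (e₂ i) ∈ S)
    (hS : Balanced (Sum.elim (j₁ ∘ t₁) (j₂ ∘ t₂)) (Sum.elim (j₁ ∘ h₁) (j₂ ∘ h₂)) S) :
    Balanced t₁ h₁ S.toLeft := by
  classical
  simp only [← Finset.mem_toLeft, ← Finset.mem_toRight] at he
  rw [balanced_iff_map_eq_map, Multiset.ext]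
  intro w₁
  have hsum := congrArg (Multiset.count (j₁ w₁)) (balanced_iff_map_eq_map.1 hS)
  simp only [map_sumElim_eq_add, ← Multiset.map_map, Multiset.count_add,
    Multiset.count_map_eq_count' _ _ hj₁] at hsum
  by_cases hw : ∃ w₂, j₁ w₁ = j₂ w₂
  · obtain ⟨w₂, hw⟩ := hw
    simp only [hw, Multiset.count_map_eq_count' _ _ hj₂] at hsum
    obtain ⟨i, ⟨rfl, rfl⟩ | ⟨rfl, rfl⟩⟩ := hmeet w₁ w₂ hw
    · have htail₁ := hdeg₁ i _ (.inl rfl)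
      have htail₂ := hdeg₂ i _ (.inl rfl)
      exact htail₁.count_map_eq_of_add_eq_add htail₂ (he i) hsum
    · have hhead₁ := hdeg₁ i _ (.inr rfl)
      have hhead₂ := hdeg₂ i _ (.inr rfl)
      exact (hhead₁.swap.count_map_eq_of_add_eq_add hhead₂.swap (he i) hsum.symm).symm
  · have hzero (s : Multiset V₂) : (s.map j₂).count (j₁ w₁) = 0 :=
      Multiset.count_eq_zero.2 fun hmem =>
        let ⟨w₂, _, hw₂⟩ := Multiset.mem_map.1 hmem
        hw ⟨w₂, hw₂.symm⟩
    simpa only [hzero, add_zero] using hsum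

theorem balanced_join_iff [DecidableEq V₂]
    (hdeg₁ : ∀ i w, w = t₁ (e₁ i) ∨ w = h₁ (e₁ i) → DegreesLEOne t₁ h₁ w)
    (hdeg₂ : ∀ i w, w = t₂ (e₂ i) ∨ w = h₂ (e₂ i) → DegreesLEOne t₂ h₂ w)
    (hj₁ : j₁.Injective) (hj₂ : j₂.Injective)
    (hmeet : ∀ w₁ w₂, j₁ w₁ = j₂ w₂ → ∃ i,
      (w₁ = t₁ (e₁ i) ∧ w₂ = t₂ (e₂ i)) ∨ (w₁ = h₁ (e₁ i) ∧ w₂ = h₂ (e₂ i)))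
    (he : ∀ i, Sum.inl (e₁ i) ∈ S ↔ Sum.inr (e₂ i) ∈ S) :
    Balanced (Sum.elim (j₁ ∘ t₁) (j₂ ∘ t₂)) (Sum.elim (j₁ ∘ h₁) (j₂ ∘ h₂)) S ↔
      Balanced t₁ h₁ S.toLeft ∧ Balanced t₂ h₂ S.toRight := by
  have right_iff (hL : Balanced t₁ h₁ S.toLeft) :
      Balanced (Sum.elim (j₁ ∘ t₁) (j₂ ∘ t₂)) (Sum.elim (j₁ ∘ h₁) (j₂ ∘ h₂)) S ↔
        Balanced t₂ h₂ S.toRight := by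
    rw [balanced_sumElim_iff_of_balanced_toLeft ((balanced_comp_iff hj₁).2 hL),
      balanced_comp_iff hj₂]
  rw [← and_congr_right right_iff, iff_and_self]
  exact Balanced.toLeft_of_join hdeg₁ hdeg₂ hj₁ hj₂ hmeet he

end Join

theorem respectsDouble_join_iff {ι : Type*} {X₁ : Set (A₁ × A₁)} {X₂ : Set (A₂ × A₂)}
    {e₁ : ι → A₁} {e₂ : ι → A₂} {S : Finset (A₁ ⊕ A₂)} :
    RespectsDouble ((fun p => (Sum.inl p.1, Sum.inl p.2)) '' X₁ ∪
        (fun p => (Sum.inr p.1, Sum.inr p.2)) '' X₂ ∪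
        {q | ∃ i, q = (Sum.inl (e₁ i), Sum.inr (e₂ i))}) S ↔
      (∀ i, Sum.inl (e₁ i) ∈ S ↔ Sum.inr (e₂ i) ∈ S) ∧
        RespectsDouble X₁ S.toLeft ∧ RespectsDouble X₂ S.toRight := by
  simp only [RespectsDouble, Set.mem_union, or_imp, forall_and, Set.forall_mem_image,
    Set.mem_ofPred_eq, forall_exists_index, forall_eq_apply_imp_iff, Finset.mem_toLeft,
    Finset.mem_toRight]
  exact and_comm

theorem respectsForbidden_join_iff {Y₁ : Set (A₁ × A₁)} {Y₂ : Set (A₂ × A₂)}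
    {S : Finset (A₁ ⊕ A₂)} :
    RespectsForbidden ((fun p => (Sum.inl p.1, Sum.inl p.2)) '' Y₁ ∪
        (fun p => (Sum.inr p.1, Sum.inr p.2)) '' Y₂) S ↔
      RespectsForbidden Y₁ S.toLeft ∧ RespectsForbidden Y₂ S.toRight := by
  simp only [RespectsForbidden, Set.mem_union, or_imp, forall_and, Set.forall_mem_image,
    Finset.mem_toLeft, Finset.mem_toRight]

theorem join_correctness_general {ι : Type*} [DecidableEq V] [DecidableEq V₁] [DecidableEq V₂]
    (t₁ h₁ : A₁ → V₁) (t₂ h₂ : A₂ → V₂)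
    (X₁ Y₁ : Set (A₁ × A₁)) (X₂ Y₂ : Set (A₂ × A₂)) (e₁ : ι → A₁) (e₂ : ι → A₂)
    (hdeg₁ : ∀ i w, w = t₁ (e₁ i) ∨ w = h₁ (e₁ i) → DegreesLEOne t₁ h₁ w)
    (hdeg₂ : ∀ i w, w = t₂ (e₂ i) ∨ w = h₂ (e₂ i) → DegreesLEOne t₂ h₂ w)
    (j₁ : V₁ → V) (j₂ : V₂ → V) (hj₁ : j₁.Injective) (hj₂ : j₂.Injective)
    (hmeet : ∀ w₁ w₂, j₁ w₁ = j₂ w₂ → ∃ i,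
      (w₁ = t₁ (e₁ i) ∧ w₂ = t₂ (e₂ i)) ∨ (w₁ = h₁ (e₁ i) ∧ w₂ = h₂ (e₂ i)))
    (S : Finset (A₁ ⊕ A₂)) :
    ProperlyBalanced (Sum.elim (j₁ ∘ t₁) (j₂ ∘ t₂)) (Sum.elim (j₁ ∘ h₁) (j₂ ∘ h₂))
      ((fun p => (Sum.inl p.1, Sum.inl p.2)) '' X₁ ∪
        (fun p => (Sum.inr p.1, Sum.inr p.2)) '' X₂ ∪
        {q | ∃ i, q = (Sum.inl (e₁ i), Sum.inr (e₂ i))})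
      ((fun p => (Sum.inl p.1, Sum.inl p.2)) '' Y₁ ∪
        (fun p => (Sum.inr p.1, Sum.inr p.2)) '' Y₂) S ↔
      (∀ i, Sum.inl (e₁ i) ∈ S ↔ Sum.inr (e₂ i) ∈ S) ∧
        ProperlyBalanced t₁ h₁ X₁ Y₁ S.toLeft ∧ ProperlyBalanced t₂ h₂ X₂ Y₂ S.toRight := by
  have hbal := balanced_join_iff (S := S) hdeg₁ hdeg₂ hj₁ hj₂ hmeet
  simp only [ProperlyBalanced, respectsDouble_join_iff, respectsForbidden_join_iff]
  tauto

theorem filter_univ_inl_mem_eq_toLeft [Fintype A₁] [DecidableEq A₁] [DecidableEq A₂]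
    (S : Finset (A₁ ⊕ A₂)) : (Finset.univ.filter fun x => Sum.inl x ∈ S) = S.toLeft := by
  ext; simp

theorem filter_univ_inr_mem_eq_toRight [Fintype A₂] [DecidableEq A₁] [DecidableEq A₂]
    (S : Finset (A₁ ⊕ A₂)) : (Finset.univ.filter fun x => Sum.inr x ∈ S) = S.toRight := by
  ext; simp

/-- Lemma on joining graphs.  `D₁` (on vertices `V₁`, arcs `A₁`, with
double arcs `X₁` and forbidden pairs `Y₁`) and `D₂` (on `V₂`, `A₂`, `X₂`, `Y₂`) are
disjoint directed multigraphs.  The arcs `e₁ 1, …, e₁ t` of `D₁` and `e₂ 1, …, e₂ t` of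
`D₂` are distinct, and all their endpoints have in-degree `1` and out-degree `1` in
their own graph.  The joined graph `D` has arc set `A₁ ⊕ A₂`, vertex set `V`, and is
described by injections `j₁ : V₁ → V`, `j₂ : V₂ → V` whose images cover `V` and overlap
exactly in the identifications `tail(e₁ i) = tail(e₂ i)`, `head(e₁ i) = head(e₂ i)`;
its double arcs are those of `D₁` and `D₂` together with the pairs `(e₁ i, e₂ i)`, and
its forbidden pairs are those of `D₁` and `D₂`.  Then a subset `S` of the arcs of `D` is
properly balanced in `D` iff (1) for each `i`, `S` contains both or neither of `e₁ i`,
`e₂ i`, and (2) the restrictions of `S` to `D₁` and to `D₂` are properly balanced. -/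
theorem join_correctness [Fintype V] [DecidableEq V]
    [Fintype V₁] [DecidableEq V₁] [Fintype V₂] [DecidableEq V₂]
    [Fintype A₁] [DecidableEq A₁] [Fintype A₂] [DecidableEq A₂]
    (t₁ h₁ : A₁ → V₁) (t₂ h₂ : A₂ → V₂)
    (X₁ Y₁ : Set (A₁ × A₁)) (X₂ Y₂ : Set (A₂ × A₂))
    (hX₁ : ∀ p ∈ X₁, p.1 ≠ p.2 ∧ t₁ p.1 = t₁ p.2 ∧ h₁ p.1 = h₁ p.2)
    (hY₁ : ∀ p ∈ Y₁, p.1 ≠ p.2 ∧ t₁ p.1 = h₁ p.2 ∧ h₁ p.1 = t₁ p.2)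
    (hX₂ : ∀ p ∈ X₂, p.1 ≠ p.2 ∧ t₂ p.1 = t₂ p.2 ∧ h₂ p.1 = h₂ p.2)
    (hY₂ : ∀ p ∈ Y₂, p.1 ≠ p.2 ∧ t₂ p.1 = h₂ p.2 ∧ h₂ p.1 = t₂ p.2)
    (t : ℕ) (e₁ : Fin t → A₁) (e₂ : Fin t → A₂)
    (he₁ : Function.Injective e₁) (he₂ : Function.Injective e₂)
    -- the endpoints of the joined arcs have in- and out-degree 1 in their own graphs
    (hdeg₁ : ∀ i : Fin t, ∀ w : V₁, (w = t₁ (e₁ i) ∨ w = h₁ (e₁ i)) →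
      (Finset.univ.filter fun x : A₁ => t₁ x = w).card = 1 ∧
      (Finset.univ.filter fun x : A₁ => h₁ x = w).card = 1)
    (hdeg₂ : ∀ i : Fin t, ∀ w : V₂, (w = t₂ (e₂ i) ∨ w = h₂ (e₂ i)) →
      (Finset.univ.filter fun x : A₂ => t₂ x = w).card = 1 ∧
      (Finset.univ.filter fun x : A₂ => h₂ x = w).card = 1)
    -- the joined graph D, described by the vertex identifications j₁, j₂
    (j₁ : V₁ → V) (j₂ : V₂ → V)
    (hj₁ : Function.Injective j₁) (hj₂ : Function.Injective j₂)
    (hcover : ∀ v : V, (∃ w, j₁ w = v) ∨ (∃ w, j₂ w = v))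
    (hident : ∀ i : Fin t,
      j₁ (t₁ (e₁ i)) = j₂ (t₂ (e₂ i)) ∧ j₁ (h₁ (e₁ i)) = j₂ (h₂ (e₂ i)))
    (hmeet : ∀ (w₁ : V₁) (w₂ : V₂), j₁ w₁ = j₂ w₂ → ∃ i : Fin t,
      (w₁ = t₁ (e₁ i) ∧ w₂ = t₂ (e₂ i)) ∨ (w₁ = h₁ (e₁ i) ∧ w₂ = h₂ (e₂ i)))
    (S : Finset (A₁ ⊕ A₂)) :
    ProperlyBalanced (Sum.elim (j₁ ∘ t₁) (j₂ ∘ t₂)) (Sum.elim (j₁ ∘ h₁) (j₂ ∘ h₂))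
      ((fun p : A₁ × A₁ => ((Sum.inl p.1 : A₁ ⊕ A₂), (Sum.inl p.2 : A₁ ⊕ A₂))) '' X₁ ∪
        (fun p : A₂ × A₂ => ((Sum.inr p.1 : A₁ ⊕ A₂), (Sum.inr p.2 : A₁ ⊕ A₂))) '' X₂ ∪
        {q | ∃ i : Fin t, q = ((Sum.inl (e₁ i) : A₁ ⊕ A₂), (Sum.inr (e₂ i) : A₁ ⊕ A₂))})
      ((fun p : A₁ × A₁ => ((Sum.inl p.1 : A₁ ⊕ A₂), (Sum.inl p.2 : A₁ ⊕ A₂))) '' Y₁ ∪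
        (fun p : A₂ × A₂ => ((Sum.inr p.1 : A₁ ⊕ A₂), (Sum.inr p.2 : A₁ ⊕ A₂))) '' Y₂)
      S ↔
    ((∀ i : Fin t, ((Sum.inl (e₁ i) : A₁ ⊕ A₂) ∈ S ↔ (Sum.inr (e₂ i) : A₁ ⊕ A₂) ∈ S)) ∧
      ProperlyBalanced t₁ h₁ X₁ Y₁
        (Finset.univ.filter fun x : A₁ => (Sum.inl x : A₁ ⊕ A₂) ∈ S) ∧
      ProperlyBalanced t₂ h₂ X₂ Y₂
        (Finset.univ.filter fun x : A₂ => (Sum.inr x : A₁ ⊕ A₂) ∈ S)) := by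
  rw [filter_univ_inl_mem_eq_toLeft, filter_univ_inr_mem_eq_toRight]
  exact join_correctness_general t₁ h₁ t₂ h₂ X₁ Y₁ X₂ Y₂ e₁ e₂
    (fun i w hw => degreesLEOne_of_card_filter_eq_one (hdeg₁ i w hw))
    (fun i w hw => degreesLEOne_of_card_filter_eq_one (hdeg₂ i w hw)) j₁ j₂ hj₁ hj₂ hmeet S

end Stmt3
end

section
/- Let N ≥ 4 be an integer, let n ≥ 1, and let t₁, …, t_n be integers with 2·|t_i| ≤ N for every i ∈ {1,…,n} and t₁ + t₂ + ⋯ + t_n = 0. Then there exists a nonempty subset J ⊆ {1,…,n} with |J| ≤ N − 1 and Σ_{i ∈ J} t_i = 0. -/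
/-!
Add the indices one at a time, choosing a negative term whenever the current partial sum is positive
and a nonnegative term otherwise. If all terms lie in `[-a, b]`, where `0 < a` and `0 ≤ b`, every
partial sum stays in `(-a, b]`. If there are at most `a + b` terms, the whole family will do;
otherwise two of the first `a + b + 1` partial sums (starting with the empty one) agree, and the
terms added in between sum to zero. Taking `a = b = M` with `M = ⌊N / 2⌋` only bounds the number of
terms by `2 * M`; to gain the missing unit, note that if both `M` and `-M` occur they form a
zero-sum pair, and otherwise, up to a global sign change, one can take `b = M - 1`.
-/

open Finset

section Chain

variable {ι : Type*}

theorem exists_monotone_chain_of_forall_exists_covBy {s : Finset ι} {P : Finset ι → Prop}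
    (hempty : P ∅) (hstep : ∀ u ⊂ s, P u → ∃ v ⊆ s, u ⋖ v ∧ P v) :
    ∃ C : ℕ → Finset ι, Monotone C ∧ (∀ k, C k ⊆ s ∧ P (C k)) ∧ ∀ k ≤ #s, #(C k) = k := by
  have hnext (u : {u // u ⊆ s ∧ P u}) :
      ∃ v : {u // u ⊆ s ∧ P u}, u ≤ v ∧ (u.1 ⊂ s → u.1 ⋖ v.1) := by
    by_cases hu : u.1 ⊂ s
    · obtain ⟨v, hvs, huv, hv⟩ := hstep u hu u.2.2
      exact ⟨⟨v, hvs, hv⟩, huv.le, fun _ ↦ huv⟩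
    · exact ⟨u, le_rfl, fun h ↦ absurd h hu⟩
  choose next le_next covBy_next using hnext
  let C (k : ℕ) : {u // u ⊆ s ∧ P u} := next^[k] ⟨∅, empty_subset s, hempty⟩
  have C_succ (k : ℕ) : C (k + 1) = next (C k) := Function.iterate_succ_apply' ..
  refine ⟨fun k ↦ C k, monotone_nat_of_le_succ fun k ↦ ?_, fun k ↦ (C k).2, fun k hk ↦ ?_⟩
  · rw [C_succ]
    exact le_next (C k)
  · induction k with
    | zero => rfl
    | succ k ih =>
      have hcard : #(C k).1 = k := ih (by lia)
      have hssub : (C k).1 ⊂ s := (C k).2.1.ssubset_of_ne fun h ↦ by rw [h] at hcard; lia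
      have hcovBy : (C k).1 ⋖ (C (k + 1)).1 := by
        rw [C_succ]
        exact covBy_next _ hssub
      rw [← Nat.covBy_iff_add_one_eq.1 hcovBy.card_finset, hcard]

theorem exists_subset_sum_eq_zero_of_chain {G : Type*} [AddCommGroup G] {f : ι → G}
    {C : ℕ → Finset ι} (hC : Monotone C) {A : Finset G} (hcard : ∀ k ≤ #A, #(C k) = k)
    (hmem : ∀ k ≤ #A, ∑ x ∈ C k, f x ∈ A) :
    ∃ J ⊆ C #A, J.Nonempty ∧ #J ≤ #A ∧ ∑ x ∈ J, f x = 0 := by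
  classical
  obtain ⟨i, hi, j, hj, hne, heq⟩ : ∃ i ∈ range (#A + 1), ∃ j ∈ range (#A + 1), i ≠ j ∧
      ∑ x ∈ C i, f x = ∑ x ∈ C j, f x :=
    exists_ne_map_eq_of_card_lt_of_maps_to (t := A) (by simp) fun k hk ↦
      hmem k (mem_range_succ_iff.1 hk)
  wlog hij : i < j generalizing i j
  · exact this j hj i hi hne.symm heq.symm (by lia)
  rw [mem_range_succ_iff] at hi hj
  have hsub : C i ⊆ C j := hC hij.le
  have hcard_sdiff : #(C j \ C i) = j - i := by
    rw [card_sdiff_of_subset hsub, hcard i hi, hcard j hj]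
  refine ⟨C j \ C i, sdiff_subset.trans (hC hj), card_pos.1 (by lia), by lia, ?_⟩
  rw [sum_sdiff_eq_sub hsub, heq, sub_self]

end Chain

section Ordered

variable {ι G : Type*} [AddCommGroup G] [LinearOrder G] [IsOrderedAddMonoid G]
  {s u : Finset ι} {t : ι → G} {a b : G}

theorem exists_covBy_sum_mem_Ioc (ht : ∀ i ∈ s, t i ∈ Set.Icc (-a) b) (hsum : ∑ i ∈ s, t i = 0)
    (hus : u ⊂ s) (hu : ∑ i ∈ u, t i ∈ Set.Ioc (-a) b) :
    ∃ v ⊆ s, u ⋖ v ∧ ∑ i ∈ v, t i ∈ Set.Ioc (-a) b := by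
  classical
  have hrest : ∑ i ∈ s \ u, t i = -∑ i ∈ u, t i := by
    rw [sum_sdiff_eq_sub hus.subset, hsum, zero_sub]
  suffices ∃ x ∈ s \ u, t x + ∑ i ∈ u, t i ∈ Set.Ioc (-a) b by
    obtain ⟨x, hx, hmem⟩ := this
    obtain ⟨hxs, hxu⟩ := mem_sdiff.1 hx
    exact ⟨insert x u, insert_subset hxs hus.subset, covBy_insert hxu, by rwa [sum_insert hxu]⟩
  rcases lt_or_ge 0 (∑ i ∈ u, t i) with hpos | hnonpos
  · obtain ⟨x, hx, hneg⟩ : ∃ x ∈ s \ u, t x < 0 :=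
      exists_lt_of_sum_lt (by simpa [hrest] using hpos)
    have hlower : -a ≤ t x := (ht x (mem_sdiff.1 hx).1).1
    exact ⟨x, hx, hlower.trans_lt (lt_add_of_pos_right _ hpos),
      (add_le_of_nonpos_left hneg.le).trans hu.2⟩
  · obtain ⟨x, hx, hnonneg⟩ : ∃ x ∈ s \ u, 0 ≤ t x :=
      exists_le_of_sum_le (sdiff_nonempty.2 hus.not_subset) (by simpa [hrest] using hnonpos)
    have hupper : t x ≤ b := (ht x (mem_sdiff.1 hx).1).2
    exact ⟨x, hx, hu.1.trans_le (le_add_of_nonneg_left hnonneg),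
      (add_le_of_nonpos_right hnonpos).trans hupper⟩

theorem exists_subset_card_le_card_Ioc_sum_eq_zero [LocallyFiniteOrder G] (hs : s.Nonempty)
    (ha : 0 < a) (hb : 0 ≤ b) (ht : ∀ i ∈ s, t i ∈ Set.Icc (-a) b) (hsum : ∑ i ∈ s, t i = 0) :
    ∃ J ⊆ s, J.Nonempty ∧ #J ≤ #(Ioc (-a) b) ∧ ∑ i ∈ J, t i = 0 := by
  rcases le_total #s #(Ioc (-a) b) with hle | hle
  · exact ⟨s, Subset.rfl, hs, hle, hsum⟩
  obtain ⟨C, hmono, hC, hcard⟩ := exists_monotone_chain_of_forall_exists_covBy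
    (s := s) (P := fun u ↦ ∑ i ∈ u, t i ∈ Set.Ioc (-a) b) (by simp [ha, hb])
    fun _ hus hu ↦ exists_covBy_sum_mem_Ioc ht hsum hus hu
  obtain ⟨J, hJ, hJ'⟩ := exists_subset_sum_eq_zero_of_chain hmono (f := t)
    (fun k hk ↦ hcard k (hk.trans hle)) fun k _ ↦ mem_Ioc.2 (hC k).2
  exact ⟨J, hJ.trans (hC _).1, hJ'⟩

end Ordered

section Integers

variable {ι : Type*} {s : Finset ι} {t : ι → ℤ}

theorem exists_subset_card_lt_two_mul_sum_eq_zero {M : ℤ} (hM : 0 < M) (hs : s.Nonempty)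
    (hbound : ∀ i ∈ s, |t i| ≤ M) (hne : ∀ i ∈ s, t i ≠ M) (hsum : ∑ i ∈ s, t i = 0) :
    ∃ J ⊆ s, J.Nonempty ∧ (#J : ℤ) < 2 * M ∧ ∑ i ∈ J, t i = 0 := by
  have ht : ∀ i ∈ s, t i ∈ Set.Icc (-M) (M - 1) := fun i hi ↦
    ⟨(abs_le.1 (hbound i hi)).1,
      Int.le_sub_one_of_lt ((le_of_abs_le (hbound i hi)).lt_of_ne (hne i hi))⟩
  obtain ⟨J, hJs, hJ, hcard, hJsum⟩ :=
    exists_subset_card_le_card_Ioc_sum_eq_zero hs hM (by lia) ht hsum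
  rw [Int.card_Ioc] at hcard
  exact ⟨J, hJs, hJ, by lia, hJsum⟩

theorem zero_sum_small_subset_general {N : ℤ} (hN : 3 ≤ N) (hs : s.Nonempty)
    (hbound : ∀ i ∈ s, 2 * |t i| ≤ N) (hsum : ∑ i ∈ s, t i = 0) :
    ∃ J ⊆ s, J.Nonempty ∧ (#J : ℤ) ≤ N - 1 ∧ ∑ i ∈ J, t i = 0 := by
  classical
  obtain ⟨M, hM, hMN, hboundM⟩ : ∃ M : ℤ, 0 < M ∧ 2 * M ≤ N ∧ ∀ i ∈ s, |t i| ≤ M :=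
    ⟨N / 2, by lia, by lia, fun i hi ↦ by have := hbound i hi; lia⟩
  by_cases hmax : ∃ i ∈ s, t i = M
  · by_cases hmin : ∃ j ∈ s, t j = -M
    · obtain ⟨i, hi, hti⟩ := hmax
      obtain ⟨j, hj, htj⟩ := hmin
      have hij : i ≠ j := by rintro rfl; lia
      refine ⟨{i, j}, by grind, insert_nonempty .., ?_, ?_⟩
      · rw [card_pair hij]; lia
      · rw [sum_pair hij, hti, htj, add_neg_cancel]
    · push Not at hmin
      obtain ⟨J, hJs, hJ, hcard, hJsum⟩ :=
        exists_subset_card_lt_two_mul_sum_eq_zero (t := -t) hM hs (by simpa using hboundM)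
          (fun i hi h ↦ hmin i hi (neg_eq_iff_eq_neg.1 h)) (by simpa using hsum)
      exact ⟨J, hJs, hJ, by lia, by simpa using hJsum⟩
  · push Not at hmax
    obtain ⟨J, hJs, hJ, hcard, hJsum⟩ :=
      exists_subset_card_lt_two_mul_sum_eq_zero hM hs hboundM hmax hsum
    exact ⟨J, hJs, hJ, by lia, hJsum⟩

end Integers

/-- Let `N ≥ 4` be an integer, `n ≥ 1`, and `t₁, …, t_n` integers with
`2·|t_i| ≤ N` for every `i` and `t₁ + ⋯ + t_n = 0`. Then there exists a nonempty subset
`J ⊆ {1,…,n}` with `|J| ≤ N − 1` and `Σ_{i ∈ J} t_i = 0`. -/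
theorem zero_sum_small_subset (N : ℤ) (hN : 4 ≤ N) (n : ℕ) (hn : 1 ≤ n)
    (t : Fin n → ℤ) (hbound : ∀ i, 2 * |t i| ≤ N) (hsum : ∑ i, t i = 0) :
    ∃ J : Finset (Fin n), J.Nonempty ∧ (J.card : ℤ) ≤ N - 1 ∧ ∑ i ∈ J, t i = 0 := by
  obtain ⟨J, -, hJ⟩ := zero_sum_small_subset_general (s := univ) (by lia) ⟨⟨0, hn⟩, mem_univ _⟩
    (fun i _ ↦ hbound i) hsum
  exact ⟨J, hJ⟩
end

section
/- Let G = (V, E ∪ A) be a strongly connected mixed graph with V nonempty, and let m = |E| + |A| be the total number of edges and arcs. Then there exists a closed walk of G that traverses every edge and every arc of G at least once, and traverses each edge and each arc at most m + 1 times. -/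
namespace Stmt7

/-- A walk in a mixed graph with vertex set `V`, edge set `E` (an edge `e` has endpoints
`e1 e` and `e2 e` and may be traversed in either direction) and arc set `A` (an arc `a`
goes from `ta a` to `ha a`).  `MWalk e1 e2 ta ha x y` is a walk from `x` to `y`. -/
inductive MWalk {V E A : Type} (e1 e2 : E → V) (ta ha : A → V) : V → V → Type
  | nil (v : V) : MWalk e1 e2 ta ha v v
  | edgeF (e : E) {y : V} (w : MWalk e1 e2 ta ha (e2 e) y) : MWalk e1 e2 ta ha (e1 e) y
  | edgeB (e : E) {y : V} (w : MWalk e1 e2 ta ha (e1 e) y) : MWalk e1 e2 ta ha (e2 e) y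
  | arc (a : A) {y : V} (w : MWalk e1 e2 ta ha (ha a) y) : MWalk e1 e2 ta ha (ta a) y

variable {V E A : Type} {e1 e2 : E → V} {ta ha : A → V}

/-- The number of times a walk traverses the edge `f` (in either direction). -/
def countE [DecidableEq E] : ∀ {x y : V}, MWalk e1 e2 ta ha x y → E → ℕ
  | _, _, .nil _, _ => 0
  | _, _, .edgeF e w, f => (if e = f then 1 else 0) + countE w f
  | _, _, .edgeB e w, f => (if e = f then 1 else 0) + countE w f
  | _, _, .arc _ w, f => countE w f

/-- The number of times a walk traverses the arc `b`. -/
def countA [DecidableEq A] : ∀ {x y : V}, MWalk e1 e2 ta ha x y → A → ℕ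
  | _, _, .nil _, _ => 0
  | _, _, .edgeF _ w, b => countA w b
  | _, _, .edgeB _ w, b => countA w b
  | _, _, .arc a w, b => (if a = b then 1 else 0) + countA w b

/-!
Grow a closed walk at a fixed vertex while keeping every multiplicity at most one more than the
number of distinct edges and arcs traversed so far. If something is still missing, then by strong
connectivity a missing edge or arc `g` leaves a visited vertex `a`, say towards `b`. Return from `b`
to `a` along a walk without repetitions and insert the detour at a visit of `a`: multiplicities
grow by at most one (that of `g` from zero to at most two), and `g` is newly traversed. After at
most `m` detours nothing is missing.
-/

section LabelledWalk

variable {F X : Type*} {step : F → X → X → Prop} {f g : F} {l p : List F} {x y z v w : X}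

/-- `IsWalk step l x y`: the list of labels `l` can be read off along a walk from `x` to `y`, where
`step f a b` means that `f` can be traversed from `a` to `b`. Edges and arcs are both labels; an
edge has a step in each direction. -/
def IsWalk (step : F → X → X → Prop) : List F → X → X → Prop
  | [], x, y => x = y
  | f :: l, x, z => ∃ y, step f x y ∧ IsWalk step l y z

/-- Each label has a single unordered pair of ends, so that its steps differ at most by their
direction. -/
def HasUniqueEnds (step : F → X → X → Prop) : Prop :=
  ∀ ⦃f x y x' y'⦄, step f x y → step f x' y' → s(x, y) = s(x', y')

/-- A walk from `x` to `z` with labels `l` that passes through `y`. -/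
def IsWalkThrough (step : F → X → X → Prop) (l : List F) (x y z : X) : Prop :=
  ∃ l₁ l₂, l₁ ++ l₂ = l ∧ IsWalk step l₁ x y ∧ IsWalk step l₂ y z

theorem isWalk_append {l₁ l₂ : List F} :
    IsWalk step (l₁ ++ l₂) x z ↔ ∃ y, IsWalk step l₁ x y ∧ IsWalk step l₂ y z := by
  induction l₁ generalizing x with
  | nil => simp only [List.nil_append, IsWalk, exists_eq_left']
  | cons f l₁ ih =>
    simp only [List.cons_append, IsWalk, ih]
    grind

theorem IsWalk.exists_nodup (hends : HasUniqueEnds step) (hl : IsWalk step l x y) :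
    ∃ p : List F, p.Nodup ∧ IsWalk step p x y := by
  induction l generalizing x with
  | nil => exact ⟨[], List.nodup_nil, hl⟩
  | cons f l ih =>
    obtain ⟨z, hf, hl⟩ := hl
    obtain ⟨p, hp_nodup, hp⟩ := ih hl
    by_cases hfp : f ∈ p
    · obtain ⟨s, t, rfl⟩ := List.append_of_mem hfp
      obtain ⟨a, -, b, hab, ht⟩ := isWalk_append.1 hp
      have hft : (f :: t).Nodup := hp_nodup.of_append_right
      -- The second traversal of `f` replaces the first, or, if opposite, ends where that began.
      rcases Sym2.eq_iff.1 (hends hf hab) with ⟨rfl, rfl⟩ | ⟨rfl, rfl⟩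
      · exact ⟨f :: t, hft, _, hf, ht⟩
      · exact ⟨t, hft.of_cons, ht⟩
    · exact ⟨f :: p, hp_nodup.cons hfp, z, hf, hp⟩

theorem IsWalk.isWalkThrough_of_mem (hends : HasUniqueEnds step) (hl : IsWalk step l v w)
    (hf : f ∈ l) (hxy : step f x y) : IsWalkThrough step l v y w := by
  obtain ⟨s, t, rfl⟩ := List.append_of_mem hf
  obtain ⟨a, hs, b, hab, ht⟩ := isWalk_append.1 hl
  rcases Sym2.eq_iff.1 (hends hxy hab) with ⟨rfl, rfl⟩ | ⟨rfl, rfl⟩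
  · exact ⟨s ++ [f], t, List.append_cons s f t |>.symm,
      isWalk_append.2 ⟨x, hs, y, hab, rfl⟩, ht⟩
  · exact ⟨s, f :: t, rfl, hs, x, hab, ht⟩

theorem IsWalkThrough.isWalk (h : IsWalkThrough step l v x w) : IsWalk step l v w := by
  obtain ⟨l₁, l₂, rfl, h₁, h₂⟩ := h
  exact isWalk_append.2 ⟨x, h₁, h₂⟩

theorem IsWalkThrough.exists_perm_append (h : IsWalkThrough step l v x w)
    (hp : IsWalk step p x x) : ∃ l', l'.Perm (l ++ p) ∧ IsWalk step l' v w := by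
  obtain ⟨l₁, l₂, rfl, h₁, h₂⟩ := h
  refine ⟨l₁ ++ (p ++ l₂), ?_, isWalk_append.2 ⟨x, h₁, isWalk_append.2 ⟨x, hp, h₂⟩⟩⟩
  rw [List.append_assoc]
  exact List.perm_append_comm.append_left l₁

theorem IsWalkThrough.exists_step_notMem (hends : HasUniqueEnds step)
    (hl : IsWalkThrough step l v x w) (hp : IsWalk step p x y) (hpl : ¬p ⊆ l) :
    ∃ g ∉ l, ∃ a b, step g a b ∧ IsWalkThrough step l v a w := by
  induction p generalizing x with
  | nil => exact absurd (List.nil_subset l) hpl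
  | cons f p ih =>
    obtain ⟨z, hf, hp⟩ := hp
    by_cases hfl : f ∈ l
    · exact ih (hl.isWalk.isWalkThrough_of_mem hends hfl hf) hp
        fun h => hpl (List.cons_subset.2 ⟨hfl, h⟩)
    · exact ⟨f, hfl, x, z, hf, hl⟩

theorem IsWalk.exists_detour (hends : HasUniqueEnds step)
    (hconn : ∀ x y, ∃ l, IsWalk step l x y) (hl : IsWalk step l v w)
    (hfl : f ∉ l) (hf : step f x y) :
    ∃ g ∉ l, ∃ p : List F, p.Nodup ∧ ∃ l', l'.Perm (l ++ g :: p) ∧ IsWalk step l' v w := by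
  obtain ⟨q, hq⟩ := hconn v x
  have hqf : IsWalk step (q ++ [f]) v y := isWalk_append.2 ⟨x, hq, y, hf, rfl⟩
  have hqfl : ¬q ++ [f] ⊆ l := fun h => hfl (h (List.mem_append_right q List.mem_cons_self))
  have hv : IsWalkThrough step l v v w := ⟨[], l, rfl, rfl, hl⟩
  obtain ⟨g, hgl, a, b, hg, ha⟩ := hv.exists_step_notMem hends hqf hqfl
  obtain ⟨r, hr⟩ := hconn b a
  obtain ⟨p, hp_nodup, hp⟩ := hr.exists_nodup hends
  exact ⟨g, hgl, p, hp_nodup, ha.exists_perm_append ⟨b, hg, hp⟩⟩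

section Count

theorem card_toFinset_lt_card_toFinset_append_cons [DecidableEq F] (hg : g ∉ l) :
    l.toFinset.card < (l ++ g :: p).toFinset.card := by
  refine Finset.card_lt_card (Finset.ssubset_iff_of_subset ?_ |>.2 ⟨g, ?_, ?_⟩)
  · simp only [List.toFinset_append, Finset.subset_union_left]
  · simp only [List.mem_toFinset, List.mem_append, List.mem_cons, true_or, or_true]
  · rwa [List.mem_toFinset]

variable [BEq F] [LawfulBEq F]

theorem count_append_cons_le_card_toFinset_add_one [DecidableEq F] (hg : g ∉ l) (hp : p.Nodup)
    (hl : ∀ f, l.count f ≤ l.toFinset.card + 1) (f : F) :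
    (l ++ g :: p).count f ≤ (l ++ g :: p).toFinset.card + 1 := by
  have hcard := card_toFinset_lt_card_toFinset_append_cons (p := p) hg
  have hpf : p.count f ≤ 1 := List.nodup_iff_count_le_one.1 hp f
  rw [List.count_append]
  obtain rfl | hgf := eq_or_ne g f
  · rw [List.count_eq_zero_of_not_mem hg, List.count_cons_self]
    omega
  · rw [List.count_cons_of_ne hgf]
    have := hl f
    omega

variable [Fintype F]

theorem exists_isWalk_le_card_toFinset [DecidableEq F] (hends : HasUniqueEnds step)
    (hstep : ∀ f, ∃ x y, step f x y) (hconn : ∀ x y, ∃ l, IsWalk step l x y) (v : X)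
    {k : ℕ} (hk : k ≤ Fintype.card F) :
    ∃ l : List F, IsWalk step l v v ∧ (∀ f, l.count f ≤ l.toFinset.card + 1) ∧
      k ≤ l.toFinset.card := by
  induction k with
  | zero => exact ⟨[], rfl, fun _ => by simp only [List.count_nil, zero_le], Nat.zero_le _⟩
  | succ k ih =>
    obtain ⟨l, hl, hcount, hkl⟩ := ih (Nat.le_of_succ_le hk)
    by_cases hcover : ∀ f, f ∈ l
    · have huniv : l.toFinset = Finset.univ :=
        Finset.eq_univ_of_forall fun f => List.mem_toFinset.2 (hcover f)
      exact ⟨l, hl, hcount, by rwa [huniv, Finset.card_univ]⟩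
    · obtain ⟨f, hfl⟩ := not_forall.1 hcover
      obtain ⟨x, y, hf⟩ := hstep f
      obtain ⟨g, hgl, p, hp, l', hperm, hl'⟩ := hl.exists_detour hends hconn hfl hf
      refine ⟨l', hl', fun f => ?_, ?_⟩
      · rw [hperm.count_eq, List.toFinset_eq_of_perm _ _ hperm]
        exact count_append_cons_le_card_toFinset_add_one hgl hp hcount f
      · rw [List.toFinset_eq_of_perm _ _ hperm]
        exact hkl.trans_lt (card_toFinset_lt_card_toFinset_append_cons hgl)

theorem exists_isWalk_forall_count_mem_Icc (hends : HasUniqueEnds step)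
    (hstep : ∀ f, ∃ x y, step f x y) (hconn : ∀ x y, ∃ l, IsWalk step l x y) (v : X) :
    ∃ l : List F, IsWalk step l v v ∧ ∀ f, l.count f ∈ Set.Icc 1 (Fintype.card F + 1) := by
  classical
  obtain ⟨l, hl, hcount, hcard⟩ := exists_isWalk_le_card_toFinset hends hstep hconn v le_rfl
  have huniv : l.toFinset = Finset.univ :=
    (Finset.card_eq_iff_eq_univ _).1 (le_antisymm (Finset.card_le_univ _) hcard)
  refine ⟨l, hl, fun f => ⟨List.one_le_count_iff.2 ?_, ?_⟩⟩
  · exact List.mem_toFinset.1 (huniv ▸ Finset.mem_univ f)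
  · exact (hcount f).trans (Nat.succ_le_succ (Finset.card_le_univ _))

end Count

end LabelledWalk

section MixedGraph

variable {x y : V}

/-- The traversals available in a mixed graph: an edge in both directions, an arc from its tail to
its head. -/
def MixedStep (e1 e2 : E → V) (ta ha : A → V) : E ⊕ A → V → V → Prop
  | .inl e, x, y => (x = e1 e ∧ y = e2 e) ∨ (x = e2 e ∧ y = e1 e)
  | .inr a, x, y => x = ta a ∧ y = ha a

theorem hasUniqueEnds_mixedStep : HasUniqueEnds (MixedStep e1 e2 ta ha) := by
  rintro (e | a) x y x' y' h h'
  · have ends_eq {x y : V} (h : MixedStep e1 e2 ta ha (.inl e) x y) : s(x, y) = s(e1 e, e2 e) :=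
      Sym2.eq_iff.2 h
    exact (ends_eq h).trans (ends_eq h').symm
  · obtain ⟨rfl, rfl⟩ := h
    obtain ⟨rfl, rfl⟩ := h'
    rfl

theorem exists_mixedStep (f : E ⊕ A) : ∃ x y, MixedStep e1 e2 ta ha f x y := by
  rcases f with e | a
  · exact ⟨e1 e, e2 e, .inl ⟨rfl, rfl⟩⟩
  · exact ⟨ta a, ha a, rfl, rfl⟩

/-- The edges and arcs traversed by a walk, in order and with repetitions. -/
def MWalk.labels : ∀ {x y : V}, MWalk e1 e2 ta ha x y → List (E ⊕ A)
  | _, _, .nil _ => []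
  | _, _, .edgeF e w => .inl e :: w.labels
  | _, _, .edgeB e w => .inl e :: w.labels
  | _, _, .arc a w => .inr a :: w.labels

theorem MWalk.isWalk_labels (w : MWalk e1 e2 ta ha x y) :
    IsWalk (MixedStep e1 e2 ta ha) w.labels x y := by
  induction w with
  | nil v => rfl
  | edgeF e w ih => exact ⟨e2 e, .inl ⟨rfl, rfl⟩, ih⟩
  | edgeB e w ih => exact ⟨e1 e, .inr ⟨rfl, rfl⟩, ih⟩
  | arc a w ih => exact ⟨ha a, ⟨rfl, rfl⟩, ih⟩

theorem IsWalk.exists_labels_eq {l : List (E ⊕ A)}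
    (hl : IsWalk (MixedStep e1 e2 ta ha) l x y) :
    ∃ w : MWalk e1 e2 ta ha x y, w.labels = l := by
  induction l generalizing x with
  | nil =>
    obtain rfl : x = y := hl
    exact ⟨.nil x, rfl⟩
  | cons f l ih =>
    obtain ⟨z, hf, hl⟩ := hl
    obtain ⟨w, rfl⟩ := ih hl
    rcases f with e | a
    · rcases hf with ⟨rfl, rfl⟩ | ⟨rfl, rfl⟩
      · exact ⟨.edgeF e w, rfl⟩
      · exact ⟨.edgeB e w, rfl⟩
    · obtain ⟨rfl, rfl⟩ := hf
      exact ⟨.arc a w, rfl⟩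

instance instLawfulBEqSum {α β : Type*} [BEq α] [LawfulBEq α] [BEq β] [LawfulBEq β] :
    LawfulBEq (α ⊕ β) where
  rfl {s} := by
    rcases s with a | b
    · exact beq_self_eq_true a
    · exact beq_self_eq_true b
  eq_of_beq {s t} h := by
    rcases s with a | b <;> rcases t with a' | b'
    · exact congrArg Sum.inl (eq_of_beq (α := α) h)
    · cases h
    · cases h
    · exact congrArg Sum.inr (eq_of_beq (α := β) h)

variable [DecidableEq E] [DecidableEq A]

theorem MWalk.count_inl_labels (w : MWalk e1 e2 ta ha x y) (e : E) :
    w.labels.count (.inl e) = countE w e := by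
  induction w <;> simp_all [MWalk.labels, countE, List.count_cons, add_comm]

theorem MWalk.count_inr_labels (w : MWalk e1 e2 ta ha x y) (a : A) :
    w.labels.count (.inr a) = countA w a := by
  induction w <;> simp_all [MWalk.labels, countA, List.count_cons, add_comm]

end MixedGraph

/-- Let `G = (V, E ∪ A)` be a strongly connected mixed graph with `V`
nonempty and `m = |E| + |A|`.  Then there exists a closed walk of `G` traversing every
edge and arc at least once, and each edge and arc at most `m + 1` times. -/
theorem chinese_postman_naive_bound [Fintype V] [Nonempty V] [DecidableEq V]
    [Fintype E] [DecidableEq E] [Fintype A] [DecidableEq A]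
    (e1 e2 : E → V) (ta ha : A → V)
    (hstrong : ∀ x y : V, Nonempty (MWalk e1 e2 ta ha x y)) :
    ∃ (v : V) (w : MWalk e1 e2 ta ha v v),
      (∀ e : E, 1 ≤ countE w e ∧ countE w e ≤ Fintype.card E + Fintype.card A + 1) ∧
      (∀ a : A, 1 ≤ countA w a ∧ countA w a ≤ Fintype.card E + Fintype.card A + 1) := by
  obtain ⟨v⟩ := ‹Nonempty V›
  have hconn (x y : V) : ∃ l, IsWalk (MixedStep e1 e2 ta ha) l x y :=
    (hstrong x y).elim fun w => ⟨w.labels, w.isWalk_labels⟩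
  obtain ⟨l, hl, hcount⟩ :=
    exists_isWalk_forall_count_mem_Icc hasUniqueEnds_mixedStep exists_mixedStep hconn v
  obtain ⟨w, rfl⟩ := hl.exists_labels_eq
  rw [Fintype.card_sum] at hcount
  refine ⟨v, w, fun e => ?_, fun a => ?_⟩
  · rw [← w.count_inl_labels]
    exact hcount (.inl e)
  · rw [← w.count_inr_labels]
    exact hcount (.inr a)

end Stmt7
end

section
/- Let u, v be two vertices, let M ≥ 1 and 1 ≤ t ≤ M be integers, and let D_uv be the weighted directed multigraph on {u, v} consisting of: a double arc (a, a') where a and a' are two arcs from v to u, each of weight 0; t − 1 further arcs from v to u, each of weight −1; M − t arcs from u to v, each of weight +1; and M − 1 further arcs from v to u, each of weight +1. Let W and B be integers with t + W ≤ M. Then the following are equivalent: (1) there exist integers p ≥ 0 and q ≥ 0 with p + q ≥ 1, p + q = t + W and p − q = t + B (i.e., there is a two-vertex multigraph on {u, v} covering the edge between u and v, of weight t + W and imbalance t + B at u); (2) there is a subset S of the arcs of D_uv containing either both or neither of a, a', whose total weight is W and whose imbalance at u equals B. -/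
namespace Stmt9

/-- Arcs of the gadget `D_uv` for an edge `uv` traversed `t` times from `u` to `v` and
`0` times from `v` to `u`:
* `Sum.inl` indexes the double arc `(a, a')`: two arcs from `v` to `u` of weight `0`;
* `Sum.inr (Sum.inl _)`: the `t − 1` arcs from `v` to `u` of weight `−1`;
* `Sum.inr (Sum.inr (Sum.inl _))`: the `M − t` arcs from `u` to `v` of weight `+1`;
* `Sum.inr (Sum.inr (Sum.inr _))`: the `M − 1` arcs from `v` to `u` of weight `+1`.
Vertices are encoded by `Bool`: `false = u`, `true = v`. -/
abbrev Arc (M t : ℕ) := Fin 2 ⊕ (Fin (t - 1) ⊕ (Fin (M - t) ⊕ Fin (M - 1)))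

/-- Tail of an arc (`false = u`, `true = v`). -/
def tl {M t : ℕ} : Arc M t → Bool :=
  Sum.elim (fun _ => true)
    (Sum.elim (fun _ => true) (Sum.elim (fun _ => false) (fun _ => true)))

/-- Head of an arc (`false = u`, `true = v`). -/
def hd {M t : ℕ} : Arc M t → Bool :=
  Sum.elim (fun _ => false)
    (Sum.elim (fun _ => false) (Sum.elim (fun _ => true) (fun _ => false)))

/-- Weight of an arc. -/
def wt {M t : ℕ} : Arc M t → ℤ :=
  Sum.elim (fun _ => 0)
    (Sum.elim (fun _ => -1) (Sum.elim (fun _ => 1) (fun _ => 1)))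

/-- Imbalance of an arc subset `S` at `u`. -/
def imb {M t : ℕ} (S : Finset (Arc M t)) : ℤ :=
  ((S.filter fun a => tl a = false).card : ℤ) -
    ((S.filter fun a => hd a = false).card : ℤ)

/-!
Start from `t` parallel arcs from `u` to `v`. Selecting the double arc reverses one of them, each
arc of weight `-1` deletes one, and each arc of weight `+1` adds one in its own direction: every
selected arc changes the number of arcs and the imbalance at `u` by its own weight and imbalance.
Only `t - 1` arcs can be deleted, so an arc always survives, possibly reversed. Conversely, if
`q = 0` then `p ≥ 1` is reached without the double arc; if `q ≥ 1`, the reversal supplies one of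
the `q` arcs and the remaining `t - 1` can be deleted freely.
-/

theorem exists_finset_iff_exists_disjSum {α β : Type*} {P : Finset (α ⊕ β) → Prop} :
    (∃ S, P S) ↔ ∃ A B, P (Finset.disjSum A B) :=
  ⟨fun ⟨S, hS⟩ => ⟨S.toLeft, S.toRight, by rwa [Finset.toLeft_disjSum_toRight]⟩,
    fun ⟨A, B, h⟩ => ⟨A.disjSum B, h⟩⟩

theorem exists_finset_card_eq {α : Type*} [Fintype α] {k : ℕ} (hk : k ≤ Fintype.card α) :
    ∃ X : Finset α, X.card = k := by
  obtain ⟨X, -, hX⟩ := Finset.exists_subset_card_eq (s := (Finset.univ : Finset α)) hk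
  exact ⟨X, hX⟩

theorem zero_mem_iff_one_mem_iff_exists_card_eq (D : Finset (Fin 2)) :
    (0 ∈ D ↔ 1 ∈ D) ↔ ∃ d ≤ 1, D.card = 2 * d := by
  revert D
  decide

section Counts

variable {M t : ℕ}

theorem sum_wt_disjSum (D : Finset (Fin 2)) (X : Finset (Fin (t - 1)))
    (Y : Finset (Fin (M - t))) (Z : Finset (Fin (M - 1))) :
    ∑ a ∈ (D.disjSum (X.disjSum (Y.disjSum Z)) : Finset (Arc M t)), wt a
      = (Y.card : ℤ) + Z.card - X.card := by
  simp only [Finset.sum_disjSum, wt, Sum.elim_inl, Sum.elim_inr, Finset.sum_const, nsmul_eq_mul]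
  ring

theorem imb_disjSum (D : Finset (Fin 2)) (X : Finset (Fin (t - 1)))
    (Y : Finset (Fin (M - t))) (Z : Finset (Fin (M - 1))) :
    imb (D.disjSum (X.disjSum (Y.disjSum Z)) : Finset (Arc M t))
      = (Y.card : ℤ) - Z.card - X.card - D.card := by
  have card_tails : ((D.disjSum (X.disjSum (Y.disjSum Z)) : Finset (Arc M t)).filter
      fun a => tl a = false).card = Y.card := by
    rw [Finset.card_filter]
    simp [Finset.sum_disjSum, tl]
  have card_heads : ((D.disjSum (X.disjSum (Y.disjSum Z)) : Finset (Arc M t)).filter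
      fun a => hd a = false).card = D.card + (X.card + Z.card) := by
    rw [Finset.card_filter]
    simp [Finset.sum_disjSum, hd]
  rw [imb, card_tails, card_heads]
  push_cast
  ring

theorem exists_arcs_iff_exists_counts {W B : ℤ} :
    (∃ S : Finset (Arc M t),
      ((Sum.inl 0 : Arc M t) ∈ S ↔ (Sum.inl 1 : Arc M t) ∈ S) ∧
      (∑ a ∈ S, wt a) = W ∧ imb S = B) ↔
    ∃ d ≤ (1 : ℕ), ∃ x ≤ t - 1, ∃ y ≤ M - t, ∃ z ≤ M - 1,
      (y + z - x : ℤ) = W ∧ (y - z - x - 2 * d : ℤ) = B := by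
  simp only [exists_finset_iff_exists_disjSum, Finset.inl_mem_disjSum,
    zero_mem_iff_one_mem_iff_exists_card_eq, sum_wt_disjSum, imb_disjSum]
  constructor
  · rintro ⟨D, X, Y, Z, ⟨d, hd, hD⟩, hW, hB⟩
    exact ⟨d, hd, X.card, card_finset_fin_le X, Y.card, card_finset_fin_le Y, Z.card,
      card_finset_fin_le Z, hW, by rw [← hB, hD]; push_cast; rfl⟩
  · rintro ⟨d, hd, x, hx, y, hy, z, hz, hW, hB⟩
    obtain ⟨D, hD⟩ := exists_finset_card_eq (α := Fin 2) (k := 2 * d) (by simpa using hd)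
    obtain ⟨X, rfl⟩ := exists_finset_card_eq (α := Fin (t - 1)) (by simpa using hx)
    obtain ⟨Y, rfl⟩ := exists_finset_card_eq (α := Fin (M - t)) (by simpa using hy)
    obtain ⟨Z, rfl⟩ := exists_finset_card_eq (α := Fin (M - 1)) (by simpa using hz)
    exact ⟨D, X, Y, Z, ⟨d, hd, hD⟩, hW, by rw [← hB, hD]; push_cast; rfl⟩

theorem one_le_add_iff_exists_counts (ht : 1 ≤ t) {p q : ℕ} (hpq : p + q ≤ M) :
    1 ≤ p + q ↔ ∃ d ≤ (1 : ℕ), ∃ x ≤ t - 1, ∃ y ≤ M - t, ∃ z ≤ M - 1,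
      t + y = p + x + d ∧ q = z + d := by
  constructor
  · intro hpos
    rcases Nat.eq_zero_or_pos q with rfl | hq
    · exact ⟨0, by omega, t - p, by omega, p - t, by omega, 0, by omega, by omega, rfl⟩
    · exact ⟨1, le_rfl, t - 1 - p, by omega, p - (t - 1), by omega, q - 1, by omega,
        by omega, by omega⟩
  · rintro ⟨d, -, x, hx, y, -, z, -, hp, hq⟩
    have survives : 1 ≤ p + d := by omega
    omega

end Counts

/-- For integers `M ≥ 1`, `1 ≤ t ≤ M` and `W, B` with `t + W ≤ M`, the
following are equivalent:
(1) there are integers `p, q ≥ 0` with `p + q ≥ 1`, `p + q = t + W` and `p − q = t + B`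
    (a two-vertex multigraph on `{u,v}` covering the edge between `u` and `v`, of weight
    `t + W` and imbalance `t + B` at `u`);
(2) there is a subset `S` of the arcs of `D_uv` containing either both or neither arc of
    the double arc, of total weight `W` and imbalance `B` at `u`. -/
theorem edge_gadget_equiv (M t : ℕ) (hM : 1 ≤ M) (ht : 1 ≤ t) (htM : t ≤ M)
    (W B : ℤ) (hW : (t : ℤ) + W ≤ (M : ℤ)) :
    (∃ p q : ℤ, 0 ≤ p ∧ 0 ≤ q ∧ 1 ≤ p + q ∧ p + q = (t : ℤ) + W ∧
      p - q = (t : ℤ) + B) ↔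
    (∃ S : Finset (Arc M t),
      ((Sum.inl 0 : Arc M t) ∈ S ↔ (Sum.inl 1 : Arc M t) ∈ S) ∧
      (∑ a ∈ S, wt a) = W ∧ imb S = B) := by
  rw [exists_arcs_iff_exists_counts]
  constructor
  · rintro ⟨p, q, hp, hq, hpos, hsum, hdiff⟩
    lift p to ℕ using hp
    lift q to ℕ using hq
    have hle : p + q ≤ M := by omega
    obtain ⟨d, hd, x, hx, y, hy, z, hz, hp, hq⟩ :=
      (one_le_add_iff_exists_counts ht hle).1 (by omega)
    exact ⟨d, hd, x, hx, y, hy, z, hz, by omega, by omega⟩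
  · rintro ⟨d, hd, x, hx, y, hy, z, hz, hweight, himb⟩
    obtain ⟨p, hp⟩ : ∃ p, t + y = p + x + d := ⟨t + y - (x + d), by omega⟩
    have hpos : 1 ≤ p + (z + d) :=
      (one_le_add_iff_exists_counts ht (by omega)).2 ⟨d, hd, x, hx, y, hy, z, hz, hp, rfl⟩
    exact ⟨p, z + d, by omega, by omega, by omega, by omega, by omega⟩

end Stmt9
end

section
/- Let u, v be two vertices, let M ≥ 2 be an integer, and let D_uv be the weighted directed multigraph on {u, v} consisting of: M − 1 arcs from u to v, each of weight +1; M − 1 arcs from v to u, each of weight +1; and a forbidden pair (a, a') where a is an arc from u to v of weight −1 and a' is an arc from v to u of weight −1. Let W and B be integers with 2 + W ≤ M. Then the following are equivalent: (1) there exist integers p ≥ 0 and q ≥ 0 with p + q ≥ 1, p + q = 2 + W and p − q = B (i.e., there is a two-vertex multigraph on {u, v} covering the edge between u and v, of weight 2 + W and imbalance B at u); (2) there is a subset S of the arcs of D_uv containing at most one of a, a', whose total weight is W and whose imbalance at u equals B. -/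
namespace Stmt10

/-- Arcs of the gadget `D_uv` for an edge `uv` traversed once in each direction:
* `Sum.inl _`: the `M − 1` arcs from `u` to `v` of weight `+1`;
* `Sum.inr (Sum.inl _)`: the `M − 1` arcs from `v` to `u` of weight `+1`;
* `Sum.inr (Sum.inr false)`: the arc `a` from `u` to `v` of weight `−1`;
* `Sum.inr (Sum.inr true)`: the arc `a'` from `v` to `u` of weight `−1`;
`(a, a')` is a forbidden pair.  Vertices are encoded by `Bool`: `false = u`, `true = v`. -/
abbrev Arc (M : ℕ) := Fin (M - 1) ⊕ (Fin (M - 1) ⊕ Bool)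

/-- Tail of an arc (`false = u`, `true = v`). -/
def tl {M : ℕ} : Arc M → Bool :=
  Sum.elim (fun _ => false) (Sum.elim (fun _ => true) (fun b => b))

/-- Head of an arc (`false = u`, `true = v`). -/
def hd {M : ℕ} : Arc M → Bool :=
  Sum.elim (fun _ => true) (Sum.elim (fun _ => false) (fun b => !b))

/-- Weight of an arc. -/
def wt {M : ℕ} : Arc M → ℤ :=
  Sum.elim (fun _ => 1) (Sum.elim (fun _ => 1) (fun _ => -1))

/-- Imbalance of an arc subset `S` at `u`. -/
def imb {M : ℕ} (S : Finset (Arc M)) : ℤ :=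
  ((S.filter fun a => tl a = false).card : ℤ) -
    ((S.filter fun a => hd a = false).card : ℤ)

/-!
Adjoin one base arc in each direction to `S`, and let `a` cancel the base arc from `v` to `u` and
`a'` the one from `u` to `v`.  Cancelling the arc from `v` to `u` has the same effect on weight and
imbalance as adding `a`, so the resulting multigraph `(p, q)` has weight two more than `S` and the
same imbalance as `S`.  At most one of `a, a'` lies in `S`, so a base arc survives and the edge is
covered.  Conversely `(p, q)` with `p, q ≤ M` is obtained from `p - 1` and `q - 1` arcs of weight
`+1`, using `a` or `a'` exactly when the direction it cancels is absent.
-/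

lemma sum_finset_bool {A : Type*} [AddCommMonoid A] (C : Finset Bool) (f : Bool → A) :
    ∑ b ∈ C, f b = (if true ∈ C then f true else 0) + if false ∈ C then f false else 0 := by
  rw [← Fintype.sum_bool fun b => if b ∈ C then f b else 0, Fintype.sum_ite_mem]

lemma sum_finset_sum_sum_bool {α β A : Type*} [DecidableEq α] [DecidableEq β] [AddCommMonoid A]
    (s : Finset (α ⊕ (β ⊕ Bool))) (f : α ⊕ (β ⊕ Bool) → A) :
    ∑ x ∈ s, f x = ∑ x ∈ s.toLeft, f (Sum.inl x) +
      (∑ y ∈ s.toRight.toLeft, f (Sum.inr (Sum.inl y)) +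
        ((if Sum.inr (Sum.inr true) ∈ s then f (Sum.inr (Sum.inr true)) else 0) +
          if Sum.inr (Sum.inr false) ∈ s then f (Sum.inr (Sum.inr false)) else 0)) := by
  simp only [Finset.sum_sum_eq_sum_toLeft_add_sum_toRight, sum_finset_bool, Finset.mem_toRight]

section Multiplicities

variable {M : ℕ} (S : Finset (Arc M))

/-- The number `p` of arcs from `u` to `v` in the two-vertex multigraph encoded by `S`: the arcs of
weight `+1` in that direction and a base arc, which `a'` cancels. -/
def forwardCount : ℕ :=
  S.toLeft.card + if Sum.inr (Sum.inr true) ∈ S then 0 else 1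

/-- The number `q` of arcs from `v` to `u` in the two-vertex multigraph encoded by `S`: the arcs of
weight `+1` in that direction and a base arc, which `a` cancels. -/
def backwardCount : ℕ :=
  S.toRight.toLeft.card + if Sum.inr (Sum.inr false) ∈ S then 0 else 1

lemma sum_wt_eq :
    ∑ e ∈ S, wt e = S.toLeft.card + S.toRight.toLeft.card
      - (if Sum.inr (Sum.inr false) ∈ S then 1 else 0)
      - (if Sum.inr (Sum.inr true) ∈ S then 1 else 0) := by
  simp only [sum_finset_sum_sum_bool, wt, Sum.elim_inl, Sum.elim_inr, Finset.sum_const, nsmul_one]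
  grind

lemma hd_eq_not_tl (e : Arc M) : hd e = !tl e := by
  rcases e with _ | _ | _ <;> rfl

lemma imb_eq_sum : imb S = ∑ e ∈ S, if tl e = false then (1 : ℤ) else -1 := by
  simp only [imb, hd_eq_not_tl, Finset.card_filter, Nat.cast_sum, ← Finset.sum_sub_distrib]
  refine Finset.sum_congr rfl fun e _ => ?_
  cases tl e <;> rfl

lemma imb_eq :
    imb S = S.toLeft.card - S.toRight.toLeft.card
      + (if Sum.inr (Sum.inr false) ∈ S then 1 else 0)
      - (if Sum.inr (Sum.inr true) ∈ S then 1 else 0) := by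
  simp only [imb_eq_sum, sum_finset_sum_sum_bool, tl, Sum.elim_inl, Sum.elim_inr, Finset.sum_const,
    reduceIte, Bool.true_eq_false, nsmul_eq_mul]
  grind

lemma forwardCount_add_backwardCount :
    (forwardCount S + backwardCount S : ℤ) = 2 + ∑ e ∈ S, wt e := by
  grind [forwardCount, backwardCount, sum_wt_eq]

lemma forwardCount_sub_backwardCount : (forwardCount S - backwardCount S : ℤ) = imb S := by
  grind [forwardCount, backwardCount, imb_eq]

lemma one_le_forwardCount_add_backwardCount
    (hS : ¬(Sum.inr (Sum.inr false) ∈ S ∧ Sum.inr (Sum.inr true) ∈ S)) :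
    1 ≤ forwardCount S + backwardCount S := by
  grind [forwardCount, backwardCount]

lemma forwardCount_le (hM : 1 ≤ M) : forwardCount S ≤ M := by
  have hcard := card_finset_fin_le S.toLeft
  grind [forwardCount]

lemma backwardCount_le (hM : 1 ≤ M) : backwardCount S ≤ M := by
  have hcard := card_finset_fin_le S.toRight.toLeft
  grind [backwardCount]

lemma exists_forwardCount_eq_backwardCount_eq {p q : ℕ} (hp : p ≤ M) (hq : q ≤ M)
    (hpq : 1 ≤ p + q) :
    ∃ S : Finset (Arc M), ¬(Sum.inr (Sum.inr false) ∈ S ∧ Sum.inr (Sum.inr true) ∈ S) ∧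
      forwardCount S = p ∧ backwardCount S = q := by
  -- At `k = 0`, truncation gives `k - 1 = 0`, and the forbidden arc in `C` cancels the base arc.
  have exists_card {k : ℕ} (hk : k ≤ M) : ∃ X : Finset (Fin (M - 1)), X.card = k - 1 := by
    obtain ⟨X, -, hX⟩ := Finset.exists_subset_card_eq
      (s := (Finset.univ : Finset (Fin (M - 1)))) (n := k - 1)
      (by rw [Finset.card_fin]; omega)
    exact ⟨X, hX⟩
  obtain ⟨X, hX⟩ := exists_card hp
  obtain ⟨Y, hY⟩ := exists_card hq
  let C : Finset Bool := {b | if b then p = 0 else q = 0}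
  have ha : false ∈ C ↔ q = 0 := by simp [C]
  have ha' : true ∈ C ↔ p = 0 := by simp [C]
  refine ⟨X.disjSum (Y.disjSum C), ?_, ?_, ?_⟩
  · simp only [Finset.inr_mem_disjSum, ha, ha']
    omega
  · simp only [forwardCount, Finset.toLeft_disjSum, Finset.inr_mem_disjSum, ha', hX]
    grind
  · simp only [backwardCount, Finset.toRight_disjSum, Finset.toLeft_disjSum,
      Finset.inr_mem_disjSum, ha, hY]
    grind

end Multiplicities

theorem forbidden_pair_gadget_equiv_general (M : ℕ) (hM : 1 ≤ M) (W B : ℤ) :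
    (∃ p q : ℤ, 0 ≤ p ∧ 0 ≤ q ∧ p ≤ M ∧ q ≤ M ∧ 1 ≤ p + q ∧ p + q = 2 + W ∧ p - q = B) ↔
    (∃ S : Finset (Arc M),
      ¬((Sum.inr (Sum.inr false) : Arc M) ∈ S ∧ (Sum.inr (Sum.inr true) : Arc M) ∈ S) ∧
      (∑ a ∈ S, wt a) = W ∧ imb S = B) := by
  constructor
  · rintro ⟨p, q, hp, hq, hpM, hqM, hpq, hW, hB⟩
    lift p to ℕ using hp
    lift q to ℕ using hq
    obtain ⟨S, hS, rfl, rfl⟩ := exists_forwardCount_eq_backwardCount_eq (M := M)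
      (by exact_mod_cast hpM) (by exact_mod_cast hqM) (by exact_mod_cast hpq)
    exact ⟨S, hS, by linarith [forwardCount_add_backwardCount S],
      by rw [← forwardCount_sub_backwardCount, hB]⟩
  · rintro ⟨S, hS, rfl, rfl⟩
    exact ⟨forwardCount S, backwardCount S, by positivity, by positivity,
      by exact_mod_cast forwardCount_le S hM, by exact_mod_cast backwardCount_le S hM,
      by exact_mod_cast one_le_forwardCount_add_backwardCount S hS,
      forwardCount_add_backwardCount S, forwardCount_sub_backwardCount S⟩

/-- For integers `M ≥ 2` and `W, B` with `2 + W ≤ M`, the following are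
equivalent:
(1) there are integers `p, q ≥ 0` with `p + q ≥ 1`, `p + q = 2 + W` and `p − q = B`
    (a two-vertex multigraph on `{u,v}` covering the edge between `u` and `v`, of weight
    `2 + W` and imbalance `B` at `u`);
(2) there is a subset `S` of the arcs of `D_uv` containing at most one of `a, a'`, of
    total weight `W` and imbalance `B` at `u`. -/
theorem forbidden_pair_gadget_equiv (M : ℕ) (hM : 2 ≤ M)
    (W B : ℤ) (hW : 2 + W ≤ (M : ℤ)) :
    (∃ p q : ℤ, 0 ≤ p ∧ 0 ≤ q ∧ 1 ≤ p + q ∧ p + q = 2 + W ∧ p - q = B) ↔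
    (∃ S : Finset (Arc M),
      ¬((Sum.inr (Sum.inr false) : Arc M) ∈ S ∧ (Sum.inr (Sum.inr true) : Arc M) ∈ S) ∧
      (∑ a ∈ S, wt a) = W ∧ imb S = B) := by
  rw [← forbidden_pair_gadget_equiv_general M (by omega)]
  exact exists₂_congr fun p q => by omega

end Stmt10
end

section
/- Let D', D₁, D₂, …, D_l be pairwise disjoint directed multigraphs (l ≥ 1), let a₁, …, a_l be distinct arcs of D', and for each i ∈ {1,…,l} let D be formed by joining a_i to some arc of D_i, where joining an arc from u to v with an arc from x to y means identifying u with x and v with y while keeping both arcs. Then pw(D) ≤ pw(D') + max_{i ∈ {1,…,l}} pw(D_i) + 1, where pw denotes pathwidth of the underlying undirected graph. -/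
namespace Stmt11

/-- The adjacency relation of the underlying undirected graph of a directed multigraph
with tail map `tl` and head map `hd`. -/
def UAdj {V A : Type*} (tl hd : A → V) (x y : V) : Prop :=
  ∃ a : A, (tl a = x ∧ hd a = y) ∨ (tl a = y ∧ hd a = x)

/-- `PwLE Adj w` : the graph with adjacency relation `Adj` has pathwidth at most `w`,
i.e. it has a path decomposition (a finite sequence of bags covering all vertices and
all edges, in which the bags containing any fixed vertex form an interval) all of whose
bags have at most `w + 1` vertices. -/
def PwLE {V : Type*} (Adj : V → V → Prop) (w : ℕ) : Prop :=
  ∃ (s : ℕ) (B : Fin s → Finset V),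
    (∀ v : V, ∃ i, v ∈ B i) ∧
    (∀ x y : V, Adj x y → ∃ i, x ∈ B i ∧ y ∈ B i) ∧
    (∀ (v : V) (i j k : Fin s), i ≤ j → j ≤ k → v ∈ B i → v ∈ B k → v ∈ B j) ∧
    (∀ i, (B i).card ≤ w + 1)

section Join

variable {V' A' : Type} {l : ℕ} {Vg Ag : Fin l → Type}

/-- The vertex map embedding the graph `D i` into the joined graph `D`: the tail and
head of the joined arc `b i` of `D i` are identified with the tail and head of the arc
`a i` of `D'`, and every other vertex of `D i` remains a fresh vertex. -/
def jmap [∀ i, DecidableEq (Vg i)] (t' h' : A' → V') (tg hg : ∀ i, Ag i → Vg i)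
    (a : Fin l → A') (b : ∀ i, Ag i) (i : Fin l) (x : Vg i) :
    V' ⊕ (Σ i, Vg i) :=
  if x = tg i (b i) then Sum.inl (t' (a i))
  else if x = hg i (b i) then Sum.inl (h' (a i))
  else Sum.inr ⟨i, x⟩

/-- Tail map of the joined graph `D` (arcs of `D` are the arcs of `D'` together with the
arcs of the `D i`; both members of each joined pair of arcs are kept). -/
def jTail [∀ i, DecidableEq (Vg i)] (t' h' : A' → V') (tg hg : ∀ i, Ag i → Vg i)
    (a : Fin l → A') (b : ∀ i, Ag i) : A' ⊕ (Σ i, Ag i) → V' ⊕ (Σ i, Vg i) :=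
  Sum.elim (fun x => Sum.inl (t' x))
    (fun x => jmap t' h' tg hg a b x.1 (tg x.1 x.2))

/-- Head map of the joined graph `D`. -/
def jHead [∀ i, DecidableEq (Vg i)] (t' h' : A' → V') (tg hg : ∀ i, Ag i → Vg i)
    (a : Fin l → A') (b : ∀ i, Ag i) : A' ⊕ (Σ i, Ag i) → V' ⊕ (Σ i, Vg i) :=
  Sum.elim (fun x => Sum.inl (h' x))
    (fun x => jmap t' h' tg hg a b x.1 (hg x.1 x.2))

/-!
Fix path decompositions of `D'` and of every `Dᵢ`, and a bag of the former containing both ends of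
`aᵢ`, called the position of `Dᵢ`. Right after each bag `X` of `D'`, insert `X ∪ Y` for all bags `Y`
of the graphs `Dᵢ` positioned at `X`, one graph after the other. A vertex of `D'` still occupies an
interval, since the inserted bags contain `X`; a fresh vertex of `Dᵢ` occupies the interval it
occupied in the decomposition of `Dᵢ`. The new bags have at most `(p + 1) + (m + 1)` vertices.
-/

section PathDecomposition

variable {V ι κ : Type*}

/-- `B` is the family of bags of a path decomposition of the graph with adjacency relation `Adj`.
The bags are indexed by an arbitrary preorder, so that decompositions can be refined
lexicographically; `IsPathDecomposition.pwLE` returns to bags indexed by `Fin s`. -/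
structure IsPathDecomposition [Preorder ι] (Adj : V → V → Prop) (B : ι → Finset V) : Prop where
  exists_mem (v : V) : ∃ i, v ∈ B i
  exists_mem_of_adj {x y : V} : Adj x y → ∃ i, x ∈ B i ∧ y ∈ B i
  ordConnected (v : V) : {i | v ∈ B i}.OrdConnected

theorem pwLE_iff_exists_isPathDecomposition {Adj : V → V → Prop} {w : ℕ} :
    PwLE Adj w ↔ ∃ (s : ℕ) (B : Fin s → Finset V),
      IsPathDecomposition Adj B ∧ ∀ i, (B i).card ≤ w + 1 := by
  constructor
  · rintro ⟨s, B, hmem, hadj, hconn, hcard⟩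
    exact ⟨s, B, ⟨hmem, hadj _ _, fun v =>
      ⟨fun i hi k hk j hj => hconn v i j k hj.1 hj.2 hi hk⟩⟩, hcard⟩
  · rintro ⟨s, B, hB, hcard⟩
    exact ⟨s, B, hB.exists_mem, fun _ _ => hB.exists_mem_of_adj, fun v _ _ _ hij hjk hi hk =>
      (hB.ordConnected v).out hi hk ⟨hij, hjk⟩, hcard⟩

namespace IsPathDecomposition

theorem comp_orderIso [Preorder ι] [Preorder κ] {Adj : V → V → Prop} {B : ι → Finset V}
    (hB : IsPathDecomposition Adj B) (e : κ ≃o ι) : IsPathDecomposition Adj (B ∘ e) where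
  exists_mem v := e.surjective.exists.1 (hB.exists_mem v)
  exists_mem_of_adj h := e.surjective.exists.1 (hB.exists_mem_of_adj h)
  ordConnected v := (hB.ordConnected v).preimage_mono e.monotone

theorem pwLE [Finite ι] [LinearOrder ι] {Adj : V → V → Prop} {B : ι → Finset V} {w : ℕ}
    (hB : IsPathDecomposition Adj B) (hcard : ∀ i, (B i).card ≤ w + 1) : PwLE Adj w := by
  have := Fintype.ofFinite ι
  exact pwLE_iff_exists_isPathDecomposition.2
    ⟨_, _, hB.comp_orderIso (Fintype.orderIsoFinOfCardEq ι rfl), fun _ => hcard _⟩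

end IsPathDecomposition

end PathDecomposition

section DisjointUnion

variable {ι : Type*} {V κ : ι → Type*}

/-- Adjacency in the disjoint union of a family of graphs. -/
def SigmaAdj (Adj : ∀ i, V i → V i → Prop) : (Σ i, V i) → (Σ i, V i) → Prop :=
  ⨆ i, Relation.Map (Adj i) (Sigma.mk i) (Sigma.mk i)

theorem sigmaAdj_iff {Adj : ∀ i, V i → V i → Prop} {p q : Σ i, V i} :
    SigmaAdj Adj p q ↔ ∃ i x y, Adj i x y ∧ ⟨i, x⟩ = p ∧ ⟨i, y⟩ = q := by
  simp only [SigmaAdj, iSup_apply, iSup_Prop_eq, Relation.Map]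

/-- The bags of a family of decompositions, listed one decomposition after the other. -/
def sigmaBag (C : ∀ i, κ i → Finset (V i)) (q : Σₗ i, κ i) : Finset (Σ i, V i) :=
  (C (ofLex q).1 (ofLex q).2).map (Function.Embedding.sigmaMk _)

theorem mem_sigmaBag {C : ∀ i, κ i → Finset (V i)} {q : Σₗ i, κ i} {i : ι} {x : V i} :
    ⟨i, x⟩ ∈ sigmaBag C q ↔ ∃ k, x ∈ C i k ∧ q = toLex ⟨i, k⟩ := by
  constructor
  · obtain ⟨j, k⟩ := q
    intro h
    obtain ⟨y, hy, hyx⟩ := Finset.mem_map.1 h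
    cases hyx
    exact ⟨k, hy, rfl⟩
  · rintro ⟨k, hx, rfl⟩
    exact Finset.mem_map_of_mem _ hx

theorem card_sigmaBag (C : ∀ i, κ i → Finset (V i)) (q : Σₗ i, κ i) :
    (sigmaBag C q).card = (C (ofLex q).1 (ofLex q).2).card :=
  Finset.card_map _

theorem IsPathDecomposition.sigma [Preorder ι] [∀ i, Preorder (κ i)]
    {Adj : ∀ i, V i → V i → Prop} {C : ∀ i, κ i → Finset (V i)}
    (hC : ∀ i, IsPathDecomposition (Adj i) (C i)) :
    IsPathDecomposition (SigmaAdj Adj) (sigmaBag C) where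
  exists_mem := by
    rintro ⟨i, x⟩
    obtain ⟨k, hx⟩ := (hC i).exists_mem x
    exact ⟨toLex ⟨i, k⟩, mem_sigmaBag.2 ⟨k, hx, rfl⟩⟩
  exists_mem_of_adj := by
    intro p q hpq
    obtain ⟨i, x, y, hxy, rfl, rfl⟩ := sigmaAdj_iff.1 hpq
    obtain ⟨k, hx, hy⟩ := (hC i).exists_mem_of_adj hxy
    exact ⟨toLex ⟨i, k⟩, mem_sigmaBag.2 ⟨k, hx, rfl⟩, mem_sigmaBag.2 ⟨k, hy, rfl⟩⟩
  ordConnected := by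
    rintro ⟨i, x⟩
    refine ⟨fun q₁ h₁ q₃ h₃ q₂ h₂ => ?_⟩
    obtain ⟨k₁, hx₁, rfl⟩ := mem_sigmaBag.1 h₁
    obtain ⟨k₃, hx₃, rfl⟩ := mem_sigmaBag.1 h₃
    obtain ⟨_, _⟩ := q₂
    obtain ⟨⟨_, _, h₁₂⟩ | ⟨_, _, h₁₂⟩, ⟨_, _, h₂₃⟩ | ⟨_, _, h₂₃⟩⟩ := h₂
    · exact absurd h₁₂ h₂₃.not_gt
    · exact absurd h₁₂ (lt_irrefl i)
    · exact absurd h₂₃ (lt_irrefl i)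
    · exact mem_sigmaBag.2 ⟨_, ((hC i).ordConnected x).out hx₁ hx₃ ⟨h₁₂, h₂₃⟩, rfl⟩

end DisjointUnion

section Attach

variable {V W ι κ : Type*}

/-- Adjacency in the graph obtained from a graph on `V` by attaching a graph on `W`: a vertex `w`
of the latter is identified with `v` if `g w = Sum.inl v`, and is kept as a fresh vertex if
`g w = Sum.inr w`. -/
def AttachAdj (AdjV : V → V → Prop) (AdjW : W → W → Prop) (g : W → V ⊕ W) :
    V ⊕ W → V ⊕ W → Prop :=
  Relation.Map AdjV Sum.inl Sum.inl ⊔ Relation.Map AdjW g g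

/-- The bags of `B`, the `j`-th one (at index `(j, ⊥)`) followed by its unions with the bags `C k`
of position `f k = j` (at index `(j, k)`). At the indices `(j, k)` with `f k ≠ j`, which are present
only to keep the index type a product, the bag `B j` is repeated. -/
def attachBag [DecidableEq ι] (B : ι → Finset V) (C : κ → Finset W) (f : κ → ι)
    (q : ι ×ₗ WithBot κ) : Finset (V ⊕ W) :=
  (B (ofLex q).1).disjSum
    ((ofLex q).2.recBotCoe ∅ fun k => if f k = (ofLex q).1 then C k else ∅)

section Bag

variable [DecidableEq ι] {B : ι → Finset V} {C : κ → Finset W} {f : κ → ι}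

theorem inl_mem_attachBag {q : ι ×ₗ WithBot κ} {v : V} :
    Sum.inl v ∈ attachBag B C f q ↔ v ∈ B (ofLex q).1 :=
  Finset.inl_mem_disjSum

theorem inr_mem_attachBag {q : ι ×ₗ WithBot κ} {w : W} :
    Sum.inr w ∈ attachBag B C f q ↔ ∃ k, w ∈ C k ∧ q = toLex (f k, (k : WithBot κ)) := by
  obtain ⟨⟨j, o⟩, rfl⟩ := toLex.surjective q
  cases o with
  | bot => simp [attachBag]
  | coe k => by_cases hj : j = f k <;> simp [attachBag, hj, eq_comm (a := f k)]

theorem card_attachBag_le {m n : ℕ} (hB : ∀ j, (B j).card ≤ m) (hC : ∀ k, (C k).card ≤ n)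
    (q : ι ×ₗ WithBot κ) : (attachBag B C f q).card ≤ m + n := by
  rw [attachBag, Finset.card_disjSum]
  refine Nat.add_le_add (hB _) ?_
  cases (ofLex q).2 with
  | bot => exact Nat.zero_le n
  | coe k =>
    rw [WithBot.recBotCoe_coe]
    split_ifs
    exacts [hC k, Nat.zero_le n]

end Bag

theorem IsPathDecomposition.attach [PartialOrder ι] [DecidableEq ι] [Preorder κ]
    {AdjV : V → V → Prop} {AdjW : W → W → Prop} {B : ι → Finset V} {C : κ → Finset W}
    {g : W → V ⊕ W} {f : κ → ι}
    (hB : IsPathDecomposition AdjV B) (hC : IsPathDecomposition AdjW C)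
    (hf : ∀ ⦃w k k'⦄, w ∈ C k → w ∈ C k' → f k = f k')
    (hg : ∀ ⦃k w⦄, w ∈ C k → (∃ v ∈ B (f k), g w = Sum.inl v) ∨ g w = Sum.inr w) :
    IsPathDecomposition (AttachAdj AdjV AdjW g) (attachBag B C f) where
  exists_mem := by
    rintro (v | w)
    · obtain ⟨j, hv⟩ := hB.exists_mem v
      exact ⟨toLex (j, ⊥), inl_mem_attachBag.2 hv⟩
    · obtain ⟨k, hw⟩ := hC.exists_mem w
      exact ⟨_, inr_mem_attachBag.2 ⟨k, hw, rfl⟩⟩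
  exists_mem_of_adj := by
    have map_mem {k w} (hw : w ∈ C k) : g w ∈ attachBag B C f (toLex (f k, (k : WithBot κ))) := by
      obtain ⟨v, hv, hgw⟩ | hgw := hg hw <;> rw [hgw]
      exacts [inl_mem_attachBag.2 hv, inr_mem_attachBag.2 ⟨k, hw, rfl⟩]
    rintro _ _ (⟨v, v', hvv', rfl, rfl⟩ | ⟨w, w', hww', rfl, rfl⟩)
    · obtain ⟨j, hv, hv'⟩ := hB.exists_mem_of_adj hvv'
      exact ⟨toLex (j, ⊥), inl_mem_attachBag.2 hv, inl_mem_attachBag.2 hv'⟩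
    · obtain ⟨k, hw, hw'⟩ := hC.exists_mem_of_adj hww'
      exact ⟨_, map_mem hw, map_mem hw'⟩
  ordConnected := by
    rintro (v | w)
    · simp only [inl_mem_attachBag]
      exact (hB.ordConnected v).preimage_mono Prod.Lex.monotone_fst_ofLex
    · refine ⟨fun q₁ h₁ q₃ h₃ q₂ h₂ => ?_⟩
      obtain ⟨k₁, hw₁, rfl⟩ := inr_mem_attachBag.1 h₁
      obtain ⟨k₃, hw₃, rfl⟩ := inr_mem_attachBag.1 h₃
      obtain ⟨j, o⟩ := q₂
      obtain ⟨h₁₂, h₂₃⟩ := And.imp Prod.Lex.toLex_le_toLex'.1 Prod.Lex.toLex_le_toLex'.1 h₂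
      dsimp only at h₁₂ h₂₃
      obtain rfl : f k₁ = j := h₁₂.1.antisymm (h₂₃.1.trans_eq (hf hw₃ hw₁))
      obtain ⟨k₂, rfl, hk₁₂⟩ := WithBot.coe_le_iff.1 (h₁₂.2 rfl)
      have hk₂₃ : k₂ ≤ k₃ := WithBot.coe_le_coe.1 (h₂₃.2 (hf hw₁ hw₃))
      have hw₂ : w ∈ C k₂ := (hC.ordConnected w).out hw₁ hw₃ ⟨hk₁₂, hk₂₃⟩
      exact inr_mem_attachBag.2 ⟨k₂, hw₂, by rw [hf hw₁ hw₂]; rfl⟩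

end Attach

theorem uAdj_sigma {ι : Type*} {V A : ι → Type*} (tl hd : ∀ i, A i → V i) :
    UAdj (Sigma.map id tl) (Sigma.map id hd) = SigmaAdj fun i => UAdj (tl i) (hd i) := by
  ext x y
  rw [sigmaAdj_iff]
  constructor
  · rintro ⟨⟨i, c⟩, ⟨rfl, rfl⟩ | ⟨rfl, rfl⟩⟩
    exacts [⟨i, _, _, ⟨c, .inl ⟨rfl, rfl⟩⟩, rfl, rfl⟩, ⟨i, _, _, ⟨c, .inr ⟨rfl, rfl⟩⟩, rfl, rfl⟩]
  · rintro ⟨i, _, _, ⟨c, ⟨rfl, rfl⟩ | ⟨rfl, rfl⟩⟩, rfl, rfl⟩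
    exacts [⟨⟨i, c⟩, .inl ⟨rfl, rfl⟩⟩, ⟨⟨i, c⟩, .inr ⟨rfl, rfl⟩⟩]

theorem uAdj_comp {V W A : Type*} (g : V → W) (tl hd : A → V) :
    UAdj (g ∘ tl) (g ∘ hd) = Relation.Map (UAdj tl hd) g g := by
  ext x y
  constructor
  · rintro ⟨c, ⟨rfl, rfl⟩ | ⟨rfl, rfl⟩⟩
    exacts [⟨_, _, ⟨c, .inl ⟨rfl, rfl⟩⟩, rfl, rfl⟩, ⟨_, _, ⟨c, .inr ⟨rfl, rfl⟩⟩, rfl, rfl⟩]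
  · rintro ⟨_, _, ⟨c, ⟨rfl, rfl⟩ | ⟨rfl, rfl⟩⟩, rfl, rfl⟩
    exacts [⟨c, .inl ⟨rfl, rfl⟩⟩, ⟨c, .inr ⟨rfl, rfl⟩⟩]

theorem uAdj_sumElim {V A₁ A₂ : Type*} (tl₁ hd₁ : A₁ → V) (tl₂ hd₂ : A₂ → V) :
    UAdj (Sum.elim tl₁ tl₂) (Sum.elim hd₁ hd₂) = UAdj tl₁ hd₁ ⊔ UAdj tl₂ hd₂ := by
  ext x y
  exact Sum.exists

section Arcs

variable [∀ i, DecidableEq (Vg i)] (t' h' : A' → V') (tg hg : ∀ i, Ag i → Vg i) (a : Fin l → A')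
  (b : ∀ i, Ag i)

theorem uAdj_jTail_jHead :
    UAdj (jTail t' h' tg hg a b) (jHead t' h' tg hg a b) =
      AttachAdj (UAdj t' h') (SigmaAdj fun i => UAdj (tg i) (hg i))
        fun q => jmap t' h' tg hg a b q.1 q.2 := by
  rw [AttachAdj, ← uAdj_sigma, ← uAdj_comp, ← uAdj_comp, ← uAdj_sumElim]
  rfl

theorem jmap_eq_inl_or_inr (i : Fin l) (x : Vg i) :
    jmap t' h' tg hg a b i x = Sum.inl (t' (a i)) ∨
      jmap t' h' tg hg a b i x = Sum.inl (h' (a i)) ∨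
        jmap t' h' tg hg a b i x = Sum.inr ⟨i, x⟩ := by
  unfold jmap
  split_ifs <;> simp

end Arcs

theorem pathwidth_join_general {V ι : Type*} {W : ι → Type*} [Finite ι] {AdjV : V → V → Prop}
    {AdjW : ∀ i, W i → W i → Prop} {p m : ℕ} (hp : PwLE AdjV p) (hm : ∀ i, PwLE (AdjW i) m)
    {u v : ι → V} (g : (Σ i, W i) → V ⊕ (Σ i, W i)) (huv : ∀ i, AdjV (u i) (v i))
    (hg : ∀ i x, g ⟨i, x⟩ = Sum.inl (u i) ∨ g ⟨i, x⟩ = Sum.inl (v i) ∨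
      g ⟨i, x⟩ = Sum.inr ⟨i, x⟩) :
    PwLE (AttachAdj AdjV (SigmaAdj AdjW) g) (p + m + 1) := by
  obtain ⟨s, B, hB, hBcard⟩ := pwLE_iff_exists_isPathDecomposition.1 hp
  choose t C hC hCcard using fun i => pwLE_iff_exists_isPathDecomposition.1 (hm i)
  choose position hu hv using fun i => hB.exists_mem_of_adj (huv i)
  obtain ⟨_, -⟩ := exists_wellFoundedLT ι
  have : Finite (Fin s ×ₗ WithBot (Σₗ i, Fin (t i))) :=
    inferInstanceAs (Finite (Fin s × Option (Σ i, Fin (t i))))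
  have hcard q : (sigmaBag C q).card ≤ m + 1 := (card_sigmaBag C q).trans_le (hCcard _ _)
  refine (hB.attach (.sigma hC) (f := fun q => position (ofLex q).1) ?_ ?_).pwLE
    fun q => (card_attachBag_le hBcard hcard q).trans_eq (by omega)
  · rintro ⟨i, x⟩ q q' hq hq'
    obtain ⟨_, -, rfl⟩ := mem_sigmaBag.1 hq
    obtain ⟨_, -, rfl⟩ := mem_sigmaBag.1 hq'
    rfl
  · rintro q ⟨i, x⟩ hq
    obtain ⟨_, -, rfl⟩ := mem_sigmaBag.1 hq
    obtain hgx | hgx | hgx := hg i x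
    exacts [.inl ⟨_, hu i, hgx⟩, .inl ⟨_, hv i, hgx⟩, .inr hgx]

/-- Let `D', D₁, …, D_l` (`l ≥ 1`) be pairwise disjoint directed
multigraphs, `a₁, …, a_l` distinct arcs of `D'`, and let `D` be formed by joining `a i`
with the arc `b i` of `D i` for each `i` (identifying the endpoints and keeping both
arcs).  If the underlying graph of `D'` has pathwidth at most `p` and that of each `D i`
has pathwidth at most `m` (e.g. `m = max_i pw(D_i)`), then the underlying graph of `D`
has pathwidth at most `p + m + 1`. -/
theorem pathwidth_join [Fintype V'] [DecidableEq V'] [Fintype A'] [DecidableEq A']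
    [∀ i, Fintype (Vg i)] [∀ i, DecidableEq (Vg i)]
    [∀ i, Fintype (Ag i)] [∀ i, DecidableEq (Ag i)]
    (hl : 1 ≤ l)
    (t' h' : A' → V') (tg hg : ∀ i, Ag i → Vg i)
    (a : Fin l → A') (ha : Function.Injective a) (b : ∀ i, Ag i)
    (p m : ℕ)
    (hp : PwLE (UAdj t' h') p)
    (hm : ∀ i : Fin l, PwLE (UAdj (tg i) (hg i)) m) :
    PwLE (UAdj (jTail t' h' tg hg a b) (jHead t' h' tg hg a b)) (p + m + 1) := by
  rw [uAdj_jTail_jHead]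
  exact pathwidth_join_general hp hm _ (fun i => ⟨a i, .inl ⟨rfl, rfl⟩⟩)
    (jmap_eq_inl_or_inr t' h' tg hg a b)

end Join

end Stmt11
end

section
/- Let G = (V, E ∪ A) be a mixed graph in which every edge and arc has weight 1, and let H be a solution of G: for each edge or arc uv of G, a two-vertex multigraph H_uv on {u, v} covering uv, such that for every vertex x the sum over all edges and arcs at x of the imbalances of the corresponding H_uv at x is 0. Let M = w(H) = Σ_uv w(H_uv). Suppose that for each edge or arc uv of G we are given a directed multigraph D_uv on vertex set {u, v} with integer arc weights, double arcs, and forbidden pairs (the gadgets for distinct edges/arcs having no arcs in common) such that for all integers W and B with w(H_uv) + W ≤ M the following are equivalent: (i) there is a two-vertex multigraph H'_uv on {u, v} covering uv with weight w(H_uv) + W and imbalance at u equal to the imbalance of H_uv at u plus B; (ii) D_uv has an arc subset which respects double arcs and forbidden pairs, has total weight W, and has imbalance B at u. Let D be the directed multigraph on vertex set V whose arcs, double arcs and forbidden pairs are the unions of those of the gadgets D_uv over all edges and arcs uv of G. Then there exists a solution H' of G with w(H') < w(H) if and only if D has a properly balanced arc subset of total weight less than 0. -/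
namespace Stmt16

/-- Imbalance, at the vertex `x`, of a two-vertex multigraph `(p, q)` on `(u, v)`
(`p` arcs from `u` to `v` and `q` arcs from `v` to `u`): `p − q` at `u` and `q − p`
at `v`. -/
def contrib {V : Type*} [DecidableEq V] (u v : V) (pq : ℕ × ℕ) (x : V) : ℤ :=
  (if x = u then (pq.1 : ℤ) - (pq.2 : ℤ) else 0) +
    (if x = v then (pq.2 : ℤ) - (pq.1 : ℤ) else 0)

variable {V E A : Type}

/-- `H` is a solution of the mixed graph `G = (V, E ∪ A)` (with edge endpoint maps
`eFst`, `eSnd` and arc maps `ta`, `hd`): it assigns to each edge or arc `uv` a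
two-vertex multigraph `H f = (p, q)` on `{u, v}` covering `uv` (for an arc, `p ≥ 1`;
for an edge, `p + q ≥ 1`), such that at every vertex the imbalances of the `H f` sum
to `0`. -/
def IsSolution [Fintype E] [Fintype A] [DecidableEq V]
    (eFst eSnd : E → V) (ta hd : A → V) (H : E ⊕ A → ℕ × ℕ) : Prop :=
  (∀ a : A, 1 ≤ (H (Sum.inr a)).1) ∧
  (∀ e : E, 1 ≤ (H (Sum.inl e)).1 + (H (Sum.inl e)).2) ∧
  (∀ x : V, (∑ f : E ⊕ A,
      contrib (Sum.elim eFst ta f) (Sum.elim eSnd hd f) (H f) x) = 0)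

/-- The weight of a solution: every edge and arc has weight `1`, so each `H f = (p, q)`
has weight `p + q`. -/
def weightSol [Fintype E] [Fintype A] (H : E ⊕ A → ℕ × ℕ) : ℕ :=
  ∑ f : E ⊕ A, ((H f).1 + (H f).2)

/-!
Selecting a subset `S` of the arcs of a gadget changes the multigraph `K` of that gadget into some
`L` with `w(L) = w(K) + w(S)` and `imb(L) = imb(K) + imb(S)`.  Both quantities are additive over
gadgets, and since all arcs of a gadget run between the same two vertices, its imbalance function
is determined by its value at one of them.  Hence arc subsets of the union correspond to new
multigraphs, balanced subsets to balanced ones, and negative weight to a gain.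

The gadgets only control changes with `w(K) + w(S) ≤ M`, where `M` is the total weight of the given
multigraphs `K`.  For a lighter solution each multigraph obeys this bound because weights are
nonnegative.  For an arc subset, `w(K) + w(S)` is nonnegative wherever it is at most `M`, being then
the weight of a multigraph, and so everywhere; as these numbers add up to less than `M`, each of
them is at most `M`.
-/

section Imbalance

variable {V α : Type*} [DecidableEq V]

/-- The imbalance, as a function of the vertex, of a single arc with tail `u` and head `v`
(identically zero for a loop). -/
def arcImbalance (u v : V) : V → ℤ :=
  Pi.single u 1 - Pi.single v 1

/-- The imbalance, as a function of the vertex, of the arc set `S` in the directed multigraph with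
tail map `t` and head map `h`. -/
def imbalance (t h : α → V) (S : Finset α) : V → ℤ :=
  ∑ b ∈ S, arcImbalance (t b) (h b)

theorem imbalance_apply (t h : α → V) (S : Finset α) (x : V) :
    imbalance t h S x = ((S.filter fun b => t b = x).card : ℤ) -
      ((S.filter fun b => h b = x).card : ℤ) := by
  simp only [imbalance, arcImbalance, Finset.sum_apply, Pi.sub_apply, Pi.single_apply,
    Finset.sum_sub_distrib, Finset.sum_boole, eq_comm (a := x)]

theorem imbalance_eq_zero_iff (t h : α → V) (S : Finset α) :
    imbalance t h S = 0 ↔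
      ∀ x, (S.filter fun b => t b = x).card = (S.filter fun b => h b = x).card := by
  simp only [funext_iff, imbalance_apply, Pi.zero_apply, sub_eq_zero, Nat.cast_inj]

theorem arcImbalance_eq_smul {u v t h : V} (huv : (t = u ∧ h = v) ∨ (t = v ∧ h = u)) :
    arcImbalance t h = arcImbalance t h u • arcImbalance u v := by
  obtain rfl | hne := eq_or_ne u v
  · obtain ⟨rfl, rfl⟩ | ⟨rfl, rfl⟩ := huv <;> simp [arcImbalance]
  · obtain ⟨rfl, rfl⟩ | ⟨rfl, rfl⟩ := huv <;> simp [arcImbalance, hne]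

theorem imbalance_eq_smul {u v : V} {t h : α → V}
    (huv : ∀ b, (t b = u ∧ h b = v) ∨ (t b = v ∧ h b = u)) (S : Finset α) :
    imbalance t h S = imbalance t h S u • arcImbalance u v := by
  rw [imbalance, Finset.sum_apply, Finset.sum_smul]
  exact Finset.sum_congr rfl fun b _ => arcImbalance_eq_smul (huv b)

/-- The weight `p + q` of a two-vertex multigraph `(p, q)`, as an integer because the weights of
gadget arcs may be negative. -/
def pairWeight (K : ℕ × ℕ) : ℤ :=
  K.1 + K.2

/-- The imbalance `p - q` of a two-vertex multigraph `(p, q)` at its first vertex. -/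
def pairImbalance (K : ℕ × ℕ) : ℤ :=
  K.1 - K.2

theorem pairWeight_nonneg (K : ℕ × ℕ) : 0 ≤ pairWeight K :=
  add_nonneg (Nat.cast_nonneg _) (Nat.cast_nonneg _)

theorem contrib_eq_smul (u v : V) (K : ℕ × ℕ) :
    contrib u v K = pairImbalance K • arcImbalance u v := by
  ext x
  simp only [contrib, pairImbalance, arcImbalance, Pi.smul_apply, Pi.sub_apply, Pi.single_apply,
    smul_eq_mul]
  split_ifs <;> ring

theorem contrib_eq_add_imbalance {u v : V} {t h : α → V}
    (huv : ∀ b, (t b = u ∧ h b = v) ∨ (t b = v ∧ h b = u)) {K L : ℕ × ℕ} {S : Finset α}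
    (hL : pairImbalance L = pairImbalance K + imbalance t h S u) :
    contrib u v L = contrib u v K + imbalance t h S := by
  rw [contrib_eq_smul, contrib_eq_smul, hL, add_smul, ← imbalance_eq_smul huv]

end Imbalance

section Union

variable {F : Type*} {α : F → Type*}

/-- The part of an arc subset `S` of the union of the gadgets that lies in the gadget `f`. -/
noncomputable def gadgetPart (S : Finset (Σ f, α f)) (f : F) : Finset (α f) :=
  S.preimage (Sigma.mk f) sigma_mk_injective.injOn

theorem mem_gadgetPart {S : Finset (Σ f, α f)} {f : F} {b : α f} :
    b ∈ gadgetPart S f ↔ ⟨f, b⟩ ∈ S :=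
  Finset.mem_preimage

variable [Fintype F]

theorem gadgetPart_univ_sigma (T : ∀ f, Finset (α f)) :
    gadgetPart (Finset.univ.sigma T) = T := by
  ext f b
  simp [mem_gadgetPart]

theorem sum_eq_sum_gadgetPart {R : Type*} [AddCommMonoid R] (S : Finset (Σ f, α f))
    (g : (Σ f, α f) → R) : ∑ b ∈ S, g b = ∑ f, ∑ b ∈ gadgetPart S f, g ⟨f, b⟩ := by
  classical
  rw [← Finset.sum_sigma]
  exact congrArg (Finset.sum · g)
    (Finset.sigma_preimage_mk_of_subset S (Finset.subset_univ _)).symm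

theorem sum_pairWeight_eq_add {w : ∀ f, α f → ℤ} {K L : F → ℕ × ℕ} {S : Finset (Σ f, α f)}
    (hL : ∀ f, pairWeight (L f) = pairWeight (K f) + ∑ b ∈ gadgetPart S f, w f b) :
    ∑ f, pairWeight (L f) = ∑ f, pairWeight (K f) + ∑ b ∈ S, w b.1 b.2 := by
  simp only [hL, Finset.sum_add_distrib, sum_eq_sum_gadgetPart S]

theorem sum_contrib_eq_add_imbalance {V : Type*} [DecidableEq V] {u v : F → V}
    {t h : ∀ f, α f → V}
    (huv : ∀ f b, (t f b = u f ∧ h f b = v f) ∨ (t f b = v f ∧ h f b = u f))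
    {K L : F → ℕ × ℕ} {S : Finset (Σ f, α f)}
    (hL : ∀ f, pairImbalance (L f) =
      pairImbalance (K f) + imbalance (t f) (h f) (gadgetPart S f) (u f)) :
    ∑ f, contrib (u f) (v f) (L f) =
      ∑ f, contrib (u f) (v f) (K f) + imbalance (fun b => t b.1 b.2) (fun b => h b.1 b.2) S := by
  simp only [fun f => contrib_eq_add_imbalance (huv f) (hL f), Finset.sum_add_distrib]
  rw [imbalance, sum_eq_sum_gadgetPart S]
  rfl

end Union

section Gadget

variable {V α : Type*} [DecidableEq V]

/-- The defining property of the gadget `(t, h, w)` of a two-vertex multigraph `K` whose first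
vertex is `u`: up to total weight `M`, the admissible changes of weight and imbalance of `K` are
those realized by feasible arc subsets.  Double arcs and forbidden pairs enter only through the
predicate `feasible`, and the required arc or edge only through `covers`. -/
def IsGadget (covers : ℕ × ℕ → Prop) (feasible : Finset α → Prop) (u : V) (t h : α → V)
    (w : α → ℤ) (K : ℕ × ℕ) (M : ℤ) : Prop :=
  ∀ W B : ℤ, pairWeight K + W ≤ M →
    ((∃ L, covers L ∧ pairWeight L = pairWeight K + W ∧
        pairImbalance L = pairImbalance K + B) ↔
      ∃ S, feasible S ∧ ∑ b ∈ S, w b = W ∧ imbalance t h S u = B)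

namespace IsGadget

variable {covers : ℕ × ℕ → Prop} {feasible : Finset α → Prop} {u : V} {t h : α → V} {w : α → ℤ}
  {K : ℕ × ℕ} {M : ℤ}

theorem exists_feasible (hD : IsGadget covers feasible u t h w K M) {L : ℕ × ℕ} (hL : covers L)
    (hLM : pairWeight L ≤ M) :
    ∃ S, feasible S ∧ pairWeight L = pairWeight K + ∑ b ∈ S, w b ∧
      pairImbalance L = pairImbalance K + imbalance t h S u := by
  obtain ⟨S, hS, hw, hi⟩ :=
    (hD (pairWeight L - pairWeight K) (pairImbalance L - pairImbalance K) (by linarith)).1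
      ⟨L, hL, by ring, by ring⟩
  exact ⟨S, hS, by linarith, by linarith⟩

theorem exists_covers (hD : IsGadget covers feasible u t h w K M) {S : Finset α}
    (hS : feasible S) (hSM : pairWeight K + ∑ b ∈ S, w b ≤ M) :
    ∃ L, covers L ∧ pairWeight L = pairWeight K + ∑ b ∈ S, w b ∧
      pairImbalance L = pairImbalance K + imbalance t h S u :=
  (hD _ _ hSM).2 ⟨S, hS, rfl, rfl⟩

end IsGadget

end Gadget

theorem le_of_sum_le_of_le_imp_nonneg {F R : Type*} [Fintype F] [AddCommMonoid R] [LinearOrder R]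
    [IsOrderedAddMonoid R] {g : F → R} {M : R} (hM : 0 ≤ M) (hg : ∀ f, g f ≤ M → 0 ≤ g f)
    (hsum : ∑ f, g f ≤ M) (f : F) : g f ≤ M := by
  have hnonneg : ∀ f, 0 ≤ g f := fun f => (le_total (g f) M).elim (hg f) hM.trans
  exact (Finset.single_le_sum (fun f _ => hnonneg f) (Finset.mem_univ f)).trans hsum

section General

variable {V F : Type*} [DecidableEq V] [Fintype F] {α : F → Type*} {u v : F → V}
  {covers : F → ℕ × ℕ → Prop} {feasible : ∀ f, Finset (α f) → Prop} {t h : ∀ f, α f → V}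
  {w : ∀ f, α f → ℤ} {H : F → ℕ × ℕ}

theorem exists_balanced_neg_of_lighter
    (hH : ∑ f, contrib (u f) (v f) (H f) = 0)
    (huv : ∀ f b, (t f b = u f ∧ h f b = v f) ∨ (t f b = v f ∧ h f b = u f))
    (hD : ∀ f, IsGadget (covers f) (feasible f) (u f) (t f) (h f) (w f) (H f)
      (∑ g, pairWeight (H g)))
    {H' : F → ℕ × ℕ} (hcov : ∀ f, covers f (H' f))
    (hbal : ∑ f, contrib (u f) (v f) (H' f) = 0)
    (hlt : ∑ f, pairWeight (H' f) < ∑ f, pairWeight (H f)) :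
    ∃ S : Finset (Σ f, α f), imbalance (fun b => t b.1 b.2) (fun b => h b.1 b.2) S = 0 ∧
      (∀ f, feasible f (gadgetPart S f)) ∧ ∑ b ∈ S, w b.1 b.2 < 0 := by
  have hle (f : F) : pairWeight (H' f) ≤ ∑ g, pairWeight (H g) :=
    (Finset.single_le_sum (fun g _ => pairWeight_nonneg (H' g)) (Finset.mem_univ f)).trans hlt.le
  choose T hT hweight himb using fun f => (hD f).exists_feasible (hcov f) (hle f)
  obtain ⟨S, rfl⟩ : ∃ S, gadgetPart S = T := ⟨_, gadgetPart_univ_sigma T⟩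
  refine ⟨S, ?_, hT, ?_⟩
  · simpa [hH, hbal] using (sum_contrib_eq_add_imbalance huv himb).symm
  · linarith [sum_pairWeight_eq_add hweight]

theorem exists_lighter_of_balanced_neg
    (hH : ∑ f, contrib (u f) (v f) (H f) = 0)
    (huv : ∀ f b, (t f b = u f ∧ h f b = v f) ∨ (t f b = v f ∧ h f b = u f))
    (hD : ∀ f, IsGadget (covers f) (feasible f) (u f) (t f) (h f) (w f) (H f)
      (∑ g, pairWeight (H g)))
    {S : Finset (Σ f, α f)}
    (hbal : imbalance (fun b => t b.1 b.2) (fun b => h b.1 b.2) S = 0)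
    (hS : ∀ f, feasible f (gadgetPart S f)) (hneg : ∑ b ∈ S, w b.1 b.2 < 0) :
    ∃ H' : F → ℕ × ℕ, (∀ f, covers f (H' f)) ∧ ∑ f, contrib (u f) (v f) (H' f) = 0 ∧
      ∑ f, pairWeight (H' f) < ∑ f, pairWeight (H f) := by
  have hle : ∀ f, pairWeight (H f) + ∑ b ∈ gadgetPart S f, w f b ≤ ∑ g, pairWeight (H g) := by
    refine le_of_sum_le_of_le_imp_nonneg
      (Finset.sum_nonneg fun g _ => pairWeight_nonneg (H g)) (fun f hf => ?_) ?_
    · obtain ⟨L, -, hL, -⟩ := (hD f).exists_covers (hS f) hf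
      exact hL ▸ pairWeight_nonneg L
    · rw [Finset.sum_add_distrib, ← sum_eq_sum_gadgetPart S fun b => w b.1 b.2]
      linarith
  choose H' hcov hweight himb using fun f => (hD f).exists_covers (hS f) (hle f)
  refine ⟨H', hcov, ?_, ?_⟩
  · rw [sum_contrib_eq_add_imbalance huv himb, hH, hbal, add_zero]
  · linarith [sum_pairWeight_eq_add hweight]

theorem mcpp_to_pbs_general
    (hH : ∑ f, contrib (u f) (v f) (H f) = 0)
    (huv : ∀ f b, (t f b = u f ∧ h f b = v f) ∨ (t f b = v f ∧ h f b = u f))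
    (hD : ∀ f, IsGadget (covers f) (feasible f) (u f) (t f) (h f) (w f) (H f)
      (∑ g, pairWeight (H g))) :
    (∃ H' : F → ℕ × ℕ, ((∀ f, covers f (H' f)) ∧ ∑ f, contrib (u f) (v f) (H' f) = 0) ∧
        ∑ f, pairWeight (H' f) < ∑ f, pairWeight (H f)) ↔
      ∃ S : Finset (Σ f, α f), imbalance (fun b => t b.1 b.2) (fun b => h b.1 b.2) S = 0 ∧
        (∀ f, feasible f (gadgetPart S f)) ∧ ∑ b ∈ S, w b.1 b.2 < 0 := by
  constructor
  · rintro ⟨H', ⟨hcov, hbal⟩, hlt⟩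
    exact exists_balanced_neg_of_lighter hH huv hD hcov hbal hlt
  · rintro ⟨S, hbal, hS, hneg⟩
    simpa only [and_assoc] using exists_lighter_of_balanced_neg hH huv hD hbal hS hneg

end General

/-- The two-vertex multigraph `(p, q)` covers the given edge (left summand) or arc (right
summand) of a mixed graph. -/
def Covers : E ⊕ A → ℕ × ℕ → Prop
  | Sum.inl _, K => 1 ≤ K.1 + K.2
  | Sum.inr _, K => 1 ≤ K.1

/-- The arc set `S` respects the double arcs `X` and the forbidden pairs `Y`. -/
def RespectsPairs {α : Type*} (X Y : Set (α × α)) (S : Finset α) : Prop :=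
  (∀ p ∈ X, (p.1 ∈ S ↔ p.2 ∈ S)) ∧ ∀ p ∈ Y, ¬(p.1 ∈ S ∧ p.2 ∈ S)

theorem isSolution_iff [Fintype E] [Fintype A] [DecidableEq V] (eFst eSnd : E → V)
    (ta hd : A → V) (H : E ⊕ A → ℕ × ℕ) :
    IsSolution eFst eSnd ta hd H ↔ (∀ f, Covers f (H f)) ∧
      ∑ f, contrib (Sum.elim eFst ta f) (Sum.elim eSnd hd f) (H f) = 0 := by
  simp only [IsSolution, Sum.forall, Covers, funext_iff, Finset.sum_apply, Pi.zero_apply]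
  tauto

theorem natCast_weightSol [Fintype E] [Fintype A] (H : E ⊕ A → ℕ × ℕ) :
    (weightSol H : ℤ) = ∑ f, pairWeight (H f) := by
  simp only [weightSol, pairWeight, Nat.cast_sum, Nat.cast_add]

/-- `G = (V, E ∪ A)` is a mixed graph whose edges and arcs all have
weight `1`, and `H` is a solution of `G` of weight `M = w(H)`.  For each edge or arc
`f` (with endpoints `u = lFst f`, `v = lSnd f`) we are given a gadget: a directed
multigraph `D_f` on `{u, v}` with arc type `Af f`, tail/head maps `gt f`/`gh f`,
integer weights `gw f`, double arcs `X f` and forbidden pairs `Y f` (arcs of distinct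
gadgets are distinct since the global arc type is the sigma type), such that for all
integers `W`, `B` with `w(H_f) + W ≤ M` the following are equivalent:
(i) there is a two-vertex multigraph on `{u, v}` covering `f`, of weight `w(H_f) + W`
    and imbalance at `u` equal to the imbalance of `H_f` at `u` plus `B`;
(ii) `D_f` has an arc subset respecting double arcs and forbidden pairs, of total
     weight `W` and imbalance `B` at `u`.
Let `D` be the union over all `f` of the gadgets `D_f`.  Then `G` has a solution of
weight less than `w(H)` iff `D` has a properly balanced arc subset of negative total
weight. -/
theorem mcpp_to_pbs [Fintype V] [DecidableEq V] [Fintype E] [DecidableEq E]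
    [Fintype A] [DecidableEq A]
    (eFst eSnd : E → V) (ta hd : A → V)
    (H : E ⊕ A → ℕ × ℕ) (hsol : IsSolution eFst eSnd ta hd H)
    (Af : E ⊕ A → Type) [∀ f, Fintype (Af f)] [∀ f, DecidableEq (Af f)]
    (gt gh : ∀ f, Af f → V) (gw : ∀ f, Af f → ℤ)
    (X Y : ∀ f, Set (Af f × Af f))
    -- each gadget lives on the two endpoints of its edge or arc
    (hon : ∀ (f : E ⊕ A) (b : Af f),
      (gt f b = Sum.elim eFst ta f ∧ gh f b = Sum.elim eSnd hd f) ∨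
      (gt f b = Sum.elim eSnd hd f ∧ gh f b = Sum.elim eFst ta f))
    -- double arcs are pairs of distinct parallel arcs, forbidden pairs are pairs of
    -- distinct mutually reverse arcs, and they are disjoint
    (hX : ∀ f, ∀ p ∈ X f, p.1 ≠ p.2 ∧ gt f p.1 = gt f p.2 ∧ gh f p.1 = gh f p.2)
    (hY : ∀ f, ∀ p ∈ Y f, p.1 ≠ p.2 ∧ gt f p.1 = gh f p.2 ∧ gh f p.1 = gt f p.2)
    (hXY : ∀ f, ∀ p ∈ X f, ∀ q ∈ Y f,
      p.1 ≠ q.1 ∧ p.1 ≠ q.2 ∧ p.2 ≠ q.1 ∧ p.2 ≠ q.2)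
    -- the defining property of the gadgets
    (hequiv : ∀ (f : E ⊕ A) (W B : ℤ),
      (((H f).1 + (H f).2 : ℤ) + W ≤ (weightSol H : ℤ)) →
      ((∃ p q : ℕ,
          (match f with
            | Sum.inl _ => 1 ≤ p + q
            | Sum.inr _ => 1 ≤ p) ∧
          ((p : ℤ) + q = ((H f).1 + (H f).2 : ℤ) + W) ∧
          ((p : ℤ) - q = ((H f).1 : ℤ) - ((H f).2 : ℤ) + B)) ↔
        (∃ S : Finset (Af f),
          (∀ p ∈ X f, (p.1 ∈ S ↔ p.2 ∈ S)) ∧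
          (∀ p ∈ Y f, ¬(p.1 ∈ S ∧ p.2 ∈ S)) ∧
          (∑ b ∈ S, gw f b) = W ∧
          ((S.filter fun b => gt f b = Sum.elim eFst ta f).card : ℤ) -
            ((S.filter fun b => gh f b = Sum.elim eFst ta f).card : ℤ) = B))) :
    -- G has a better solution iff D has a properly balanced subset of negative weight
    (∃ H' : E ⊕ A → ℕ × ℕ,
        IsSolution eFst eSnd ta hd H' ∧ weightSol H' < weightSol H) ↔
    (∃ S : Finset (Σ f : E ⊕ A, Af f),
        -- S is balanced
        (∀ x : V, (S.filter fun b => gt b.1 b.2 = x).card =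
            (S.filter fun b => gh b.1 b.2 = x).card) ∧
        -- S respects the double arcs of D
        (∀ (f : E ⊕ A), ∀ p ∈ X f,
          ((⟨f, p.1⟩ : Σ f, Af f) ∈ S ↔ (⟨f, p.2⟩ : Σ f, Af f) ∈ S)) ∧
        -- S respects the forbidden pairs of D
        (∀ (f : E ⊕ A), ∀ p ∈ Y f,
          ¬((⟨f, p.1⟩ : Σ f, Af f) ∈ S ∧ (⟨f, p.2⟩ : Σ f, Af f) ∈ S)) ∧
        -- S has negative total weight
        (∑ b ∈ S, gw b.1 b.2) < 0) := by
  have hD (f : E ⊕ A) : IsGadget (Covers f) (RespectsPairs (X f) (Y f)) (Sum.elim eFst ta f)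
      (gt f) (gh f) (gw f) (H f) (∑ g, pairWeight (H g)) := by
    intro W B hW
    simp only [RespectsPairs, imbalance_apply, Prod.exists, and_assoc]
    cases f <;> exact hequiv _ W B ((natCast_weightSol H).symm ▸ hW)
  simpa only [← isSolution_iff, ← natCast_weightSol, Nat.cast_lt, imbalance_eq_zero_iff,
    RespectsPairs, mem_gadgetPart, forall_and, and_assoc] using
    mcpp_to_pbs_general ((isSolution_iff ..).1 hsol).2 hon hD

end Stmt16
end
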